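/- arXiv:math/9911073 — 3 statements merged into one kernel-verified Lean document; each statement's English description precedes it below -/
import Mathlib

section
/- If a and b are closed terms of Λ× of the same type and a = b is not provable in Λ×, then one can construct type-instances a′ of a and b′ of b, closed terms h, h₁, …, h_l (l ≥ 0), and find a natural number i such that, for a variable x : p × p, the equalities π^i(h a′)h₁…h_l (p¹x)(p²x) = p¹x and π^i(h b′)h₁…h_l (p¹x)(p²x) = p²x are provable in Λ×. -/
set_option autoImplicit false

/-- Types of the typed lambda calculus Λ× : generated from atomic types (`ν`) and the
constant atomic type `T` by `→` and `×`. -/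
inductive Tyx (ν : Type) : Type
  | atom : ν → Tyx ν
  | unit : Tyx ν
  | arrow : Tyx ν → Tyx ν → Tyx ν
  | prod : Tyx ν → Tyx ν → Tyx ν

/-- A typing context. -/
abbrev Ctxx (ν : Type) : Type := List (Tyx ν)

/-- Typed de Bruijn variables. -/
inductive Varx {ν : Type} : Ctxx ν → Tyx ν → Type
  | vz {Γ : Ctxx ν} {A : Tyx ν} : Varx (A :: Γ) A
  | vs {Γ : Ctxx ν} {A B : Tyx ν} : Varx Γ A → Varx (B :: Γ) A

/-- Typed terms of Λ×. -/
inductive Tmx {ν : Type} : Ctxx ν → Tyx ν → Type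
  | var {Γ : Ctxx ν} {A : Tyx ν} : Varx Γ A → Tmx Γ A
  | app {Γ : Ctxx ν} {A B : Tyx ν} : Tmx Γ (Tyx.arrow A B) → Tmx Γ A → Tmx Γ B
  | lam {Γ : Ctxx ν} {A B : Tyx ν} : Tmx (A :: Γ) B → Tmx Γ (Tyx.arrow A B)
  | pair {Γ : Ctxx ν} {A B : Tyx ν} : Tmx Γ A → Tmx Γ B → Tmx Γ (Tyx.prod A B)
  | p1 {Γ : Ctxx ν} {A B : Tyx ν} : Tmx Γ (Tyx.prod A B) → Tmx Γ A
  | p2 {Γ : Ctxx ν} {A B : Tyx ν} : Tmx Γ (Tyx.prod A B) → Tmx Γ B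
  | k {Γ : Ctxx ν} : Tmx Γ Tyx.unit

/-- Renamings between contexts. -/
def Renx {ν : Type} (Γ Δ : Ctxx ν) : Type := ∀ A : Tyx ν, Varx Γ A → Varx Δ A

def Renx.ext {ν : Type} {Γ Δ : Ctxx ν} (ρ : Renx Γ Δ) (A : Tyx ν) :
    ∀ B : Tyx ν, Varx (A :: Γ) B → Varx (A :: Δ) B
  | _, .vz => .vz
  | _, .vs w => .vs (ρ _ w)

def Tmx.rename {ν : Type} : ∀ {Γ Δ : Ctxx ν} {A : Tyx ν}, Renx Γ Δ → Tmx Γ A → Tmx Δ A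
  | _, _, _, ρ, .var v => .var (ρ _ v)
  | _, _, _, ρ, .app f a => .app (f.rename ρ) (a.rename ρ)
  | _, _, _, ρ, .lam b => .lam (b.rename (Renx.ext ρ _))
  | _, _, _, ρ, .pair a b => .pair (a.rename ρ) (b.rename ρ)
  | _, _, _, ρ, .p1 a => .p1 (a.rename ρ)
  | _, _, _, ρ, .p2 a => .p2 (a.rename ρ)
  | _, _, _, _, .k => .k

/-- Simultaneous substitutions. -/
def Substx {ν : Type} (Γ Δ : Ctxx ν) : Type := ∀ A : Tyx ν, Varx Γ A → Tmx Δ A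

def Substx.ext {ν : Type} {Γ Δ : Ctxx ν} (σ : Substx Γ Δ) (A : Tyx ν) :
    ∀ B : Tyx ν, Varx (A :: Γ) B → Tmx (A :: Δ) B
  | _, .vz => .var .vz
  | _, .vs w => (σ _ w).rename (fun _ => Varx.vs)

def Tmx.subst {ν : Type} : ∀ {Γ Δ : Ctxx ν} {A : Tyx ν}, Substx Γ Δ → Tmx Γ A → Tmx Δ A
  | _, _, _, σ, .var v => σ _ v
  | _, _, _, σ, .app f a => .app (f.subst σ) (a.subst σ)
  | _, _, _, σ, .lam b => .lam (b.subst (Substx.ext σ _))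
  | _, _, _, σ, .pair a b => .pair (a.subst σ) (b.subst σ)
  | _, _, _, σ, .p1 a => .p1 (a.subst σ)
  | _, _, _, σ, .p2 a => .p2 (a.subst σ)
  | _, _, _, _, .k => .k

def Substx.cons {ν : Type} {Γ Δ : Ctxx ν} {A : Tyx ν} (b : Tmx Δ A) (σ : Substx Γ Δ) :
    ∀ B : Tyx ν, Varx (A :: Γ) B → Tmx Δ B
  | _, .vz => b
  | _, .vs w => σ _ w

/-- Substitution of a single term for the last variable: `a[b/x]`. -/
def Tmx.subst1 {ν : Type} {Γ : Ctxx ν} {A B : Tyx ν} (a : Tmx (A :: Γ) B) (b : Tmx Γ A) :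
    Tmx Γ B :=
  a.subst (Substx.cons b (fun _ v => .var v))

/-- The theory Λ× of βη-equality with surjective pairing and terminal type `T`. -/
inductive Eqvx {ν : Type} : ∀ {Γ : Ctxx ν} {A : Tyx ν}, Tmx Γ A → Tmx Γ A → Prop
  | refl {Γ : Ctxx ν} {A : Tyx ν} (a : Tmx Γ A) : Eqvx a a
  | symm {Γ : Ctxx ν} {A : Tyx ν} {a b : Tmx Γ A} : Eqvx a b → Eqvx b a
  | trans {Γ : Ctxx ν} {A : Tyx ν} {a b c : Tmx Γ A} : Eqvx a b → Eqvx b c → Eqvx a c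
  | congApp {Γ : Ctxx ν} {A B : Tyx ν} {f g : Tmx Γ (Tyx.arrow A B)} {a b : Tmx Γ A} :
      Eqvx f g → Eqvx a b → Eqvx (.app f a) (.app g b)
  | congLam {Γ : Ctxx ν} {A B : Tyx ν} {a b : Tmx (A :: Γ) B} :
      Eqvx a b → Eqvx (.lam a) (.lam b)
  | congPair {Γ : Ctxx ν} {A B : Tyx ν} {a a' : Tmx Γ A} {b b' : Tmx Γ B} :
      Eqvx a a' → Eqvx b b' → Eqvx (.pair a b) (.pair a' b')
  | congP1 {Γ : Ctxx ν} {A B : Tyx ν} {a b : Tmx Γ (Tyx.prod A B)} :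
      Eqvx a b → Eqvx (.p1 a) (.p1 b)
  | congP2 {Γ : Ctxx ν} {A B : Tyx ν} {a b : Tmx Γ (Tyx.prod A B)} :
      Eqvx a b → Eqvx (.p2 a) (.p2 b)
  | beta {Γ : Ctxx ν} {A B : Tyx ν} (a : Tmx (A :: Γ) B) (b : Tmx Γ A) :
      Eqvx (.app (.lam a) b) (a.subst1 b)
  | eta {Γ : Ctxx ν} {A B : Tyx ν} (a : Tmx Γ (Tyx.arrow A B)) :
      Eqvx (.lam (.app (a.rename (fun _ => Varx.vs)) (.var .vz))) a
  | prodBeta1 {Γ : Ctxx ν} {A B : Tyx ν} (a : Tmx Γ A) (b : Tmx Γ B) :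
      Eqvx (.p1 (.pair a b)) a
  | prodBeta2 {Γ : Ctxx ν} {A B : Tyx ν} (a : Tmx Γ A) (b : Tmx Γ B) :
      Eqvx (.p2 (.pair a b)) b
  | prodEta {Γ : Ctxx ν} {A B : Tyx ν} (c : Tmx Γ (Tyx.prod A B)) :
      Eqvx (.pair (.p1 c) (.p2 c)) c
  | unit {Γ : Ctxx ν} (a : Tmx Γ Tyx.unit) : Eqvx a .k

def Varx.elim0 {ν : Type} {A : Tyx ν} {C : Sort*} : Varx ([] : Ctxx ν) A → C :=
  fun v => nomatch v

/-- Weakening of a closed term into an arbitrary context. -/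
def Tmx.wk {ν : Type} {Δ : Ctxx ν} {A : Tyx ν} (t : Tmx ([] : Ctxx ν) A) : Tmx Δ A :=
  t.rename (fun _ v => v.elim0)

/-- One-step reduction of types of Λ× (replacement of a redex subtype by its
contractum). -/
inductive TyStep {ν : Type} : Tyx ν → Tyx ν → Prop
  | arrProd (A B₁ B₂ : Tyx ν) :
      TyStep (.arrow A (.prod B₁ B₂)) (.prod (.arrow A B₁) (.arrow A B₂))
  | prodArr (A₁ A₂ B : Tyx ν) :
      TyStep (.arrow (.prod A₁ A₂) B) (.arrow A₁ (.arrow A₂ B))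
  | prodAssoc (A B C : Tyx ν) :
      TyStep (.prod A (.prod B C)) (.prod (.prod A B) C)
  | arrUnit (A : Tyx ν) : TyStep (.arrow A .unit) .unit
  | unitArr (B : Tyx ν) : TyStep (.arrow .unit B) B
  | prodUnit (A : Tyx ν) : TyStep (.prod A .unit) A
  | unitProd (A : Tyx ν) : TyStep (.prod .unit A) A
  | arrL {A A' : Tyx ν} (B : Tyx ν) : TyStep A A' → TyStep (.arrow A B) (.arrow A' B)
  | arrR (A : Tyx ν) {B B' : Tyx ν} : TyStep B B' → TyStep (.arrow A B) (.arrow A B')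
  | prodL {A A' : Tyx ν} (B : Tyx ν) : TyStep A A' → TyStep (.prod A B) (.prod A' B)
  | prodR (A : Tyx ν) {B B' : Tyx ν} : TyStep B B' → TyStep (.prod A B) (.prod A B')

/-- A type is in product normal form iff none of its subtypes is a redex, i.e. iff no
type reduction applies to it. -/
def PNF {ν : Type} (A : Tyx ν) : Prop := ∀ B : Tyx ν, ¬ TyStep A B

/-- Substitution of types for the atomic types, on types of Λ×. -/
def Tyx.substA {ν : Type} (σ : ν → Tyx ν) : Tyx ν → Tyx ν
  | .atom v => σ v
  | .unit => .unit
  | .arrow A B => .arrow (A.substA σ) (B.substA σ)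
  | .prod A B => .prod (A.substA σ) (B.substA σ)

def Varx.substA {ν : Type} (σ : ν → Tyx ν) :
    ∀ {Γ : Ctxx ν} {A : Tyx ν}, Varx Γ A → Varx (Γ.map (Tyx.substA σ)) (A.substA σ)
  | _, _, .vz => .vz
  | _, _, .vs v => .vs (v.substA σ)

/-- Substitution of types for the atomic types, on terms of Λ× : type-instances. -/
def Tmx.substA {ν : Type} (σ : ν → Tyx ν) :
    ∀ {Γ : Ctxx ν} {A : Tyx ν}, Tmx Γ A → Tmx (Γ.map (Tyx.substA σ)) (A.substA σ)
  | _, _, .var v => .var (v.substA σ)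
  | _, _, .app f a => .app (f.substA σ) (a.substA σ)
  | _, _, .lam b => .lam (b.substA σ)
  | _, _, .pair a b => .pair (a.substA σ) (b.substA σ)
  | _, _, .p1 a => .p1 (a.substA σ)
  | _, _, .p2 a => .p2 (a.substA σ)
  | _, _, .k => .k

/-- `Tyx.arrs [A₁, …, Aₘ] B = Aₘ → (… → (A₁ → B))` : the type of `λx₁…xₘ.a`. -/
def Tyx.arrs {ν : Type} : Ctxx ν → Tyx ν → Tyx ν
  | [], B => B
  | A :: Γ, B => Tyx.arrs Γ (Tyx.arrow A B)

/-- λ-abstracting all the free variables of a term of Λ×. -/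
def Tmx.lamAll {ν : Type} : ∀ {Γ : Ctxx ν} {A : Tyx ν}, Tmx Γ A → Tmx [] (Tyx.arrs Γ A)
  | [], _, a => a
  | _ :: Γ, _, a => Tmx.lamAll (Γ := Γ) (Tmx.lam a)

/-- `Tyx.arrsR [B₁, …, Bₙ] C = B₁ → (… → (Bₙ → C))`. -/
def Tyx.arrsR {ν : Type} : List (Tyx ν) → Tyx ν → Tyx ν
  | [], C => C
  | B :: Bs, C => Tyx.arrow B (Tyx.arrsR Bs C)

/-- A list of terms `h₁ : B₁, …, hₙ : Bₙ` in context `Δ`. -/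
inductive HListx {ν : Type} (Δ : Ctxx ν) : List (Tyx ν) → Type
  | nil : HListx Δ []
  | cons {B : Tyx ν} {Bs : List (Tyx ν)} : Tmx Δ B → HListx Δ Bs → HListx Δ (B :: Bs)

def HListx.apps {ν : Type} {Δ : Ctxx ν} :
    ∀ {Bs : List (Tyx ν)} {C : Tyx ν}, HListx Δ Bs → Tmx Δ (Tyx.arrsR Bs C) → Tmx Δ C
  | _, _, .nil, t => t
  | _, _, .cons h hs, t => HListx.apps hs (t.app h)

/-- Iterated application `t h₁ … hₙ`. -/
def Tmx.apps {ν : Type} {Δ : Ctxx ν} {Bs : List (Tyx ν)} {C : Tyx ν}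
    (t : Tmx Δ (Tyx.arrsR Bs C)) (hs : HListx Δ Bs) : Tmx Δ C :=
  hs.apps t

/-- `PiStep n i t u` : regarding the type of `t` as an iterated product
`×_{j=1}^n A_j` (left-nested, `n ≥ 1`), `u` is the `i`-th projection `π^i t`
(for `1 ≤ i ≤ n`): `π^i t = t` if `n = 1`, and for `n > 1`, `πⁿ t = p² t` and
`π^i t = π^i (p¹ t)` for `i < n`. -/
inductive PiStep {ν : Type} {Γ : Ctxx ν} : ℕ → ℕ → ∀ {A B : Tyx ν}, Tmx Γ A → Tmx Γ B → Prop
  | one {A : Tyx ν} (t : Tmx Γ A) : PiStep 1 1 t t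
  | last {n : ℕ} {A B : Tyx ν} (t : Tmx Γ (Tyx.prod A B)) : PiStep (n + 1) (n + 1) t (.p2 t)
  | lower {n i : ℕ} {A B C : Tyx ν} (t : Tmx Γ (Tyx.prod A B)) {u : Tmx Γ C} :
      PiStep n i (.p1 t) u → PiStep (n + 1) i t u

/-! ### Renaming and substitution -/

attribute [reducible] Renx Substx

section Syn
variable {ν : Type}

theorem Renx.ext_comp {Γ Δ Θ : Ctxx ν} (ρ : Renx Γ Δ) (ρ' : Renx Δ Θ) (A : Tyx ν) :
    (fun B (v : Varx (A :: Γ) B) => Renx.ext ρ' A B (Renx.ext ρ A B v))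
      = Renx.ext (fun B v => ρ' B (ρ B v)) A := by
  funext B v; cases v <;> rfl

theorem Tmx.rename_rename {Γ : Ctxx ν} {A : Tyx ν} (t : Tmx Γ A) :
    ∀ {Δ Θ : Ctxx ν} (ρ : Renx Γ Δ) (ρ' : Renx Δ Θ),
      (t.rename ρ).rename ρ' = t.rename (fun B v => ρ' B (ρ B v)) := by
  induction t with
  | var v => intros; rfl
  | app f a ihf iha => intros; simp only [Tmx.rename, ihf, iha]
  | lam b ih => intro Δ Θ ρ ρ'; simp only [Tmx.rename]; rw [ih, Renx.ext_comp]
  | pair a b iha ihb => intros; simp only [Tmx.rename, iha, ihb]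
  | p1 a ih => intros; simp only [Tmx.rename, ih]
  | p2 a ih => intros; simp only [Tmx.rename, ih]
  | k => intros; rfl

theorem Substx.ext_ren {Γ Δ Θ : Ctxx ν} (ρ : Renx Γ Δ) (σ : Substx Δ Θ) (A : Tyx ν) :
    (fun B (v : Varx (A :: Γ) B) => Substx.ext σ A B (Renx.ext ρ A B v))
      = Substx.ext (fun B v => σ B (ρ B v)) A := by
  funext B v; cases v <;> rfl

theorem Tmx.subst_rename {Γ : Ctxx ν} {A : Tyx ν} (t : Tmx Γ A) :
    ∀ {Δ Θ : Ctxx ν} (ρ : Renx Γ Δ) (σ : Substx Δ Θ),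
      (t.rename ρ).subst σ = t.subst (fun B v => σ B (ρ B v)) := by
  induction t with
  | var v => intros; rfl
  | app f a ihf iha => intros; simp only [Tmx.rename, Tmx.subst, ihf, iha]
  | lam b ih => intro Δ Θ ρ σ; simp only [Tmx.rename, Tmx.subst]; rw [ih, Substx.ext_ren]
  | pair a b iha ihb => intros; simp only [Tmx.rename, Tmx.subst, iha, ihb]
  | p1 a ih => intros; simp only [Tmx.rename, Tmx.subst, ih]
  | p2 a ih => intros; simp only [Tmx.rename, Tmx.subst, ih]
  | k => intros; rfl

theorem Substx.ren_ext {Γ Δ Θ : Ctxx ν} (σ : Substx Γ Δ) (ρ : Renx Δ Θ) (A : Tyx ν) :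
    (fun B (v : Varx (A :: Γ) B) => (Substx.ext σ A B v).rename (Renx.ext ρ A))
      = Substx.ext (fun B v => (σ B v).rename ρ) A := by
  funext B v
  cases v with
  | vz => rfl
  | vs v => simp only [Substx.ext, Tmx.rename_rename]; rfl

theorem Tmx.rename_subst {Γ : Ctxx ν} {A : Tyx ν} (t : Tmx Γ A) :
    ∀ {Δ Θ : Ctxx ν} (σ : Substx Γ Δ) (ρ : Renx Δ Θ),
      (t.subst σ).rename ρ = t.subst (fun B v => (σ B v).rename ρ) := by
  induction t with
  | var v => intros; rfl
  | app f a ihf iha => intros; simp only [Tmx.rename, Tmx.subst, ihf, iha]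
  | lam b ih => intro Δ Θ σ ρ; simp only [Tmx.rename, Tmx.subst]; rw [ih, Substx.ren_ext]
  | pair a b iha ihb => intros; simp only [Tmx.rename, Tmx.subst, iha, ihb]
  | p1 a ih => intros; simp only [Tmx.rename, Tmx.subst, ih]
  | p2 a ih => intros; simp only [Tmx.rename, Tmx.subst, ih]
  | k => intros; rfl

theorem Substx.ext_subst {Γ Δ Θ : Ctxx ν} (σ : Substx Γ Δ) (τ : Substx Δ Θ) (A : Tyx ν) :
    (fun B (v : Varx (A :: Γ) B) => (Substx.ext σ A B v).subst (Substx.ext τ A))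
      = Substx.ext (fun B v => (σ B v).subst τ) A := by
  funext B v
  cases v with
  | vz => rfl
  | vs v => simp only [Substx.ext, Tmx.rename_subst, Tmx.subst_rename]

theorem Tmx.subst_subst {Γ : Ctxx ν} {A : Tyx ν} (t : Tmx Γ A) :
    ∀ {Δ Θ : Ctxx ν} (σ : Substx Γ Δ) (τ : Substx Δ Θ),
      (t.subst σ).subst τ = t.subst (fun B v => (σ B v).subst τ) := by
  induction t with
  | var v => intros; rfl
  | app f a ihf iha => intros; simp only [Tmx.subst, ihf, iha]
  | lam b ih => intro Δ Θ σ ρ; simp only [Tmx.subst]; rw [ih, Substx.ext_subst]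
  | pair a b iha ihb => intros; simp only [Tmx.subst, iha, ihb]
  | p1 a ih => intros; simp only [Tmx.subst, ih]
  | p2 a ih => intros; simp only [Tmx.subst, ih]
  | k => intros; rfl

theorem Substx.ext_id {Γ : Ctxx ν} (A : Tyx ν) :
    Substx.ext (fun B (v : Varx Γ B) => Tmx.var v) A = fun _ v => Tmx.var v := by
  funext B v; cases v <;> rfl

theorem Tmx.subst_id {Γ : Ctxx ν} {A : Tyx ν} (t : Tmx Γ A) :
    t.subst (fun _ v => .var v) = t := by
  induction t with
  | var v => rfl
  | app f a ihf iha => simp only [Tmx.subst, ihf, iha]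
  | lam b ih => simp only [Tmx.subst]; rw [Substx.ext_id, ih]
  | pair a b iha ihb => simp only [Tmx.subst, iha, ihb]
  | p1 a ih => simp only [Tmx.subst, ih]
  | p2 a ih => simp only [Tmx.subst, ih]
  | k => rfl

theorem Renx.ext_id {Γ : Ctxx ν} (A : Tyx ν) :
    Renx.ext (fun B (v : Varx Γ B) => v) A = fun _ v => v := by
  funext B v; cases v <;> rfl

theorem Tmx.rename_id {Γ : Ctxx ν} {A : Tyx ν} (t : Tmx Γ A) :
    t.rename (fun _ v => v) = t := by
  induction t with
  | var v => rfl
  | app f a ihf iha => simp only [Tmx.rename, ihf, iha]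
  | lam b ih => simp only [Tmx.rename]; rw [Renx.ext_id, ih]
  | pair a b iha ihb => simp only [Tmx.rename, iha, ihb]
  | p1 a ih => simp only [Tmx.rename, ih]
  | p2 a ih => simp only [Tmx.rename, ih]
  | k => rfl

theorem Tmx.ext_subst1 {Γ Δ : Ctxx ν} {A B : Tyx ν} (b : Tmx (A :: Γ) B) (σ : Substx Γ Δ)
    (s : Tmx Δ A) :
    (b.subst (Substx.ext σ A)).subst1 s = b.subst (Substx.cons s σ) := by
  unfold Tmx.subst1
  rw [Tmx.subst_subst]
  congr 1
  funext C v
  cases v with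
  | vz => rfl
  | vs v =>
    simp only [Substx.ext, Tmx.subst_rename]
    exact Tmx.subst_id _

theorem Tmx.rename_subst1 {Γ Δ : Ctxx ν} {A B : Tyx ν} (a : Tmx (A :: Γ) B) (b : Tmx Γ A)
    (ρ : Renx Γ Δ) :
    (a.subst1 b).rename ρ = (a.rename (Renx.ext ρ A)).subst1 (b.rename ρ) := by
  unfold Tmx.subst1
  rw [Tmx.rename_subst, Tmx.subst_rename]
  congr 1
  funext C v
  cases v <;> rfl

theorem Eqvx.rename {Γ : Ctxx ν} {A : Tyx ν} {a b : Tmx Γ A} (h : Eqvx a b) :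
    ∀ {Δ : Ctxx ν} (ρ : Renx Γ Δ), Eqvx (a.rename ρ) (b.rename ρ) := by
  induction h with
  | refl a => intros; exact .refl _
  | symm _ ih => intros; exact .symm (ih _)
  | trans _ _ ih1 ih2 => intros; exact .trans (ih1 _) (ih2 _)
  | congApp _ _ ih1 ih2 => intros; exact .congApp (ih1 _) (ih2 _)
  | congLam _ ih => intros; exact .congLam (ih _)
  | congPair _ _ ih1 ih2 => intros; exact .congPair (ih1 _) (ih2 _)
  | congP1 _ ih => intros; exact .congP1 (ih _)
  | congP2 _ ih => intros; exact .congP2 (ih _)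
  | beta a b => intro Δ ρ; rw [Tmx.rename_subst1]; exact .beta _ _
  | eta a =>
    intro Δ ρ
    have h := Eqvx.eta (a.rename ρ)
    rw [Tmx.rename_rename] at h
    simp only [Tmx.rename]
    rw [Tmx.rename_rename]
    exact h
  | prodBeta1 a b => intros; exact .prodBeta1 _ _
  | prodBeta2 a b => intros; exact .prodBeta2 _ _
  | prodEta c => intros; exact .prodEta _
  | unit a => intros; exact .unit _

theorem Tmx.rename_closed {Δ : Ctxx ν} {A : Tyx ν} (t : Tmx ([] : Ctxx ν) A)
    (ρ : Renx [] Δ) : t.rename ρ = t.wk := by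
  unfold Tmx.wk
  congr 1
  funext B v; cases v

theorem Tmx.wk_nil {A : Tyx ν} (t : Tmx ([] : Ctxx ν) A) : (t.wk : Tmx [] A) = t := by
  rw [← Tmx.rename_closed t (fun _ v => v), Tmx.rename_id]

theorem Tmx.wk_rename {Γ Δ : Ctxx ν} {A : Tyx ν} (t : Tmx ([] : Ctxx ν) A)
    (ρ : Renx Γ Δ) : (t.wk : Tmx Γ A).rename ρ = t.wk := by
  unfold Tmx.wk
  rw [Tmx.rename_rename, Tmx.rename_closed]
  rfl

theorem Tmx.subst_closed {Δ : Ctxx ν} {A : Tyx ν} (t : Tmx ([] : Ctxx ν) A)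
    (σ : Substx [] Δ) : t.subst σ = t.wk := by
  have h : σ = fun B v => (Tmx.var v : Tmx [] B).rename (fun _ v => v.elim0) := by
    funext B v; cases v
  rw [h, ← Tmx.rename_subst, Tmx.subst_id]
  rfl

theorem Tmx.wk_subst {Γ Δ : Ctxx ν} {A : Tyx ν} (t : Tmx ([] : Ctxx ν) A)
    (σ : Substx Γ Δ) : (t.wk : Tmx Γ A).subst σ = t.wk := by
  conv_lhs => unfold Tmx.wk
  rw [Tmx.subst_rename, Tmx.subst_closed]

end Syn

/-! ### Set-theoretic models -/

section Model
variable {ν : Type}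

/-- The full set-theoretic type hierarchy in which every atom is interpreted by `X`. -/
def Interp (X : Type) : Tyx ν → Type
  | .atom _ => X
  | .unit => Unit
  | .arrow A B => Interp X A → Interp X B
  | .prod A B => Interp X A × Interp X B

def Envx (X : Type) (Γ : Ctxx ν) : Type := ∀ A : Tyx ν, Varx Γ A → Interp X A

def Envx.cons {X : Type} {Γ : Ctxx ν} {A : Tyx ν} (x : Interp X A) (η : Envx X Γ) :
    ∀ B : Tyx ν, Varx (A :: Γ) B → Interp X B
  | _, .vz => x
  | _, .vs w => η _ w

def Tmx.eval (X : Type) : ∀ {Γ : Ctxx ν} {A : Tyx ν}, Tmx Γ A → Envx X Γ → Interp X A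
  | _, _, .var v, η => η _ v
  | _, _, .app f a, η => (f.eval X η : Interp X _ → Interp X _) (a.eval X η)
  | _, _, .lam b, η => fun x => b.eval X (Envx.cons x η)
  | _, _, .pair a b, η => (a.eval X η, b.eval X η)
  | _, _, .p1 a, η => (a.eval X η : Interp X _ × Interp X _).1
  | _, _, .p2 a, η => (a.eval X η : Interp X _ × Interp X _).2
  | _, _, .k, _ => ()

def Envx.nil (X : Type) : Envx X ([] : Ctxx ν) := fun _ v => v.elim0

end Model

/-! ### Finite completeness -/

section Complete
variable {ν : Type}

/-- Context extensions. -/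
inductive Extx (Δ : Ctxx ν) : Ctxx ν → Type
  | refl : Extx Δ Δ
  | step {Γ : Ctxx ν} (A : Tyx ν) : Extx Δ Γ → Extx Δ (A :: Γ)

def Extx.ren {Δ : Ctxx ν} : ∀ {Γ : Ctxx ν}, Extx Δ Γ → Renx Δ Γ
  | _, .refl => fun _ v => v
  | _, .step _ e => fun _ v => .vs (e.ren _ v)

def Extx.trans {Δ Γ : Ctxx ν} (e : Extx Δ Γ) : ∀ {Θ : Ctxx ν}, Extx Γ Θ → Extx Δ Θ
  | _, .refl => e
  | _, .step A e' => .step A (e.trans e')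

theorem Extx.ren_trans {Δ Γ Θ : Ctxx ν} (e : Extx Δ Γ) (e' : Extx Γ Θ) :
    (e.trans e').ren = fun A v => e'.ren A (e.ren A v) := by
  induction e' with
  | refl => rfl
  | step A e' ih => simp only [Extx.trans, Extx.ren, ih]; try rfl

theorem Extx.length_le {Δ Γ : Ctxx ν} (e : Extx Δ Γ) : Δ.length ≤ Γ.length := by
  induction e with
  | refl => exact le_rfl
  | step A e ih => simp only [List.length_cons]; omega

theorem Extx.unique {Δ Γ : Ctxx ν} (e e' : Extx Δ Γ) : e = e' := by
  induction e with
  | refl =>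
    cases e' with
    | refl => rfl
    | step A e => have := e.length_le; simp at this
  | step A e ih =>
    cases e' with
    | refl => have := e.length_le; simp at this
    | step A e' => rw [ih e']

def Tmx.ex {Δ Γ : Ctxx ν} {A : Tyx ν} (t : Tmx Δ A) (e : Extx Δ Γ) : Tmx Γ A := t.rename e.ren

theorem Tmx.ex_refl {Δ : Ctxx ν} {A : Tyx ν} (t : Tmx Δ A) : t.ex .refl = t := t.rename_id

theorem Tmx.ex_trans {Δ Γ Θ : Ctxx ν} {A : Tyx ν} (t : Tmx Δ A) (e : Extx Δ Γ)
    (e' : Extx Γ Θ) : t.ex (e.trans e') = (t.ex e).ex e' := by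
  unfold Tmx.ex
  rw [Tmx.rename_rename, Extx.ren_trans]

/-- Terms packed with context and type. -/
def Tok (ν : Type) : Type := Σ Γ : Ctxx ν, Σ A : Tyx ν, Tmx Γ A

def Tmx.tok {Γ : Ctxx ν} {A : Tyx ν} (t : Tmx Γ A) : Tok ν := ⟨Γ, A, t⟩

theorem Tmx.tok_inj {Γ : Ctxx ν} {A : Tyx ν} {t u : Tmx Γ A} (h : t.tok = u.tok) : t = u := by
  unfold Tmx.tok at h
  cases h
  rfl

/-- Closure under immediate subterms. -/
structure SubClosed (S : Set (Tok ν)) : Prop where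
  app1 : ∀ {Γ : Ctxx ν} {A B : Tyx ν} {f : Tmx Γ (.arrow A B)} {a : Tmx Γ A},
    (Tmx.app f a).tok ∈ S → f.tok ∈ S
  app2 : ∀ {Γ : Ctxx ν} {A B : Tyx ν} {f : Tmx Γ (.arrow A B)} {a : Tmx Γ A},
    (Tmx.app f a).tok ∈ S → a.tok ∈ S
  lam : ∀ {Γ : Ctxx ν} {A B : Tyx ν} {b : Tmx (A :: Γ) B}, (Tmx.lam b).tok ∈ S → b.tok ∈ S
  pair1 : ∀ {Γ : Ctxx ν} {A B : Tyx ν} {a : Tmx Γ A} {b : Tmx Γ B},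
    (Tmx.pair a b).tok ∈ S → a.tok ∈ S
  pair2 : ∀ {Γ : Ctxx ν} {A B : Tyx ν} {a : Tmx Γ A} {b : Tmx Γ B},
    (Tmx.pair a b).tok ∈ S → b.tok ∈ S
  p1 : ∀ {Γ : Ctxx ν} {A B : Tyx ν} {a : Tmx Γ (.prod A B)}, (Tmx.p1 a).tok ∈ S → a.tok ∈ S
  p2 : ∀ {Γ : Ctxx ν} {A B : Tyx ν} {a : Tmx Γ (.prod A B)}, (Tmx.p2 a).tok ∈ S → a.tok ∈ S

theorem SubClosed.union {S S' : Set (Tok ν)} (h : SubClosed S) (h' : SubClosed S') :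
    SubClosed (S ∪ S') where
  app1 := fun H => H.imp h.app1 h'.app1
  app2 := fun H => H.imp h.app2 h'.app2
  lam := fun H => H.imp h.lam h'.lam
  pair1 := fun H => H.imp h.pair1 h'.pair1
  pair2 := fun H => H.imp h.pair2 h'.pair2
  p1 := fun H => H.imp h.p1 h'.p1
  p2 := fun H => H.imp h.p2 h'.p2

theorem exists_subClosed {Γ : Ctxx ν} {A : Tyx ν} (t : Tmx Γ A) :
    ∃ S : Set (Tok ν), S.Finite ∧ SubClosed S ∧ t.tok ∈ S := by
  induction t with
  | var v =>
    refine ⟨{(Tmx.var v).tok}, Set.finite_singleton _, ?_, rfl⟩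
    constructor <;> (intros; rename_i h; cases h)
  | k =>
    refine ⟨{(Tmx.k).tok}, Set.finite_singleton _, ?_, rfl⟩
    constructor <;> (intros; rename_i h; cases h)
  | app f a ihf iha =>
    obtain ⟨S, hS, cS, mS⟩ := ihf
    obtain ⟨S', hS', cS', mS'⟩ := iha
    refine ⟨insert (Tmx.app f a).tok (S ∪ S'), (hS.union hS').insert _, ?_, .inl rfl⟩
    have c := cS.union cS'
    constructor <;> (intros; rename_i h; rcases h with h | h)
    all_goals first
      | (cases h; done)
      | (cases h; first | exact .inr (.inl mS) | exact .inr (.inr mS'))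
      | exact .inr (c.app1 h) | exact .inr (c.app2 h) | exact .inr (c.lam h)
      | exact .inr (c.pair1 h) | exact .inr (c.pair2 h) | exact .inr (c.p1 h)
      | exact .inr (c.p2 h)
  | pair f a ihf iha =>
    obtain ⟨S, hS, cS, mS⟩ := ihf
    obtain ⟨S', hS', cS', mS'⟩ := iha
    refine ⟨insert (Tmx.pair f a).tok (S ∪ S'), (hS.union hS').insert _, ?_, .inl rfl⟩
    have c := cS.union cS'
    constructor <;> (intros; rename_i h; rcases h with h | h)
    all_goals first
      | (cases h; done)
      | (cases h; first | exact .inr (.inl mS) | exact .inr (.inr mS'))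
      | exact .inr (c.app1 h) | exact .inr (c.app2 h) | exact .inr (c.lam h)
      | exact .inr (c.pair1 h) | exact .inr (c.pair2 h) | exact .inr (c.p1 h)
      | exact .inr (c.p2 h)
  | lam b ih =>
    obtain ⟨S, hS, c, mS⟩ := ih
    refine ⟨insert (Tmx.lam b).tok S, hS.insert _, ?_, .inl rfl⟩
    constructor <;> (intros; rename_i h; rcases h with h | h)
    all_goals first
      | (cases h; done)
      | (cases h; first | exact .inr mS)
      | exact .inr (c.app1 h) | exact .inr (c.app2 h) | exact .inr (c.lam h)
      | exact .inr (c.pair1 h) | exact .inr (c.pair2 h) | exact .inr (c.p1 h)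
      | exact .inr (c.p2 h)
  | p1 b ih =>
    obtain ⟨S, hS, c, mS⟩ := ih
    refine ⟨insert (Tmx.p1 b).tok S, hS.insert _, ?_, .inl rfl⟩
    constructor <;> (intros; rename_i h; rcases h with h | h)
    all_goals first
      | (cases h; done)
      | (cases h; first | exact .inr mS)
      | exact .inr (c.app1 h) | exact .inr (c.app2 h) | exact .inr (c.lam h)
      | exact .inr (c.pair1 h) | exact .inr (c.pair2 h) | exact .inr (c.p1 h)
      | exact .inr (c.p2 h)
  | p2 b ih =>
    obtain ⟨S, hS, c, mS⟩ := ih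
    refine ⟨insert (Tmx.p2 b).tok S, hS.insert _, ?_, .inl rfl⟩
    constructor <;> (intros; rename_i h; rcases h with h | h)
    all_goals first
      | (cases h; done)
      | (cases h; first | exact .inr mS)
      | exact .inr (c.app1 h) | exact .inr (c.app2 h) | exact .inr (c.lam h)
      | exact .inr (c.pair1 h) | exact .inr (c.pair2 h) | exact .inr (c.p1 h)
      | exact .inr (c.p2 h)

/-- The base set of the model given by a set of tokens. -/
def Dom (S : Set (Tok ν)) : Type := {d : Set (Tok ν) // d ⊆ S}

def Dom.mk (S : Set (Tok ν)) (P : Tok ν → Prop) : Dom S := ⟨{x | x ∈ S ∧ P x}, fun _ h => h.1⟩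

theorem Dom.finite {S : Set (Tok ν)} (h : S.Finite) : Finite (Dom S) :=
  h.finite_subsets.to_subtype

def Dom.newVar (S : Set (Tok ν)) (A : Tyx ν) (Γ : Ctxx ν) : Dom S :=
  Dom.mk S fun x => ∃ (Θ : Ctxx ν) (e : Extx (A :: Γ) Θ), x = (Tmx.var (e.ren A .vz)).tok

def Dom.app {S : Set (Tok ν)} (A B : Tyx ν) (d e : Dom S) : Dom S :=
  Dom.mk S fun x => ∃ (Γ : Ctxx ν) (f : Tmx Γ (.arrow A B)) (a : Tmx Γ A),
    x = (Tmx.app f a).tok ∧ f.tok ∈ d.1 ∧ a.tok ∈ e.1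

def Dom.pair {S : Set (Tok ν)} (A B : Tyx ν) (d e : Dom S) : Dom S :=
  Dom.mk S fun x => ∃ (Γ : Ctxx ν) (a : Tmx Γ A) (b : Tmx Γ B),
    x = (Tmx.pair a b).tok ∧ a.tok ∈ d.1 ∧ b.tok ∈ e.1

def Dom.p1 {S : Set (Tok ν)} (A B : Tyx ν) (d : Dom S) : Dom S :=
  Dom.mk S fun x => ∃ (Γ : Ctxx ν) (a : Tmx Γ (.prod A B)), x = (Tmx.p1 a).tok ∧ a.tok ∈ d.1

def Dom.p2 {S : Set (Tok ν)} (A B : Tyx ν) (d : Dom S) : Dom S :=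
  Dom.mk S fun x => ∃ (Γ : Ctxx ν) (a : Tmx Γ (.prod A B)), x = (Tmx.p2 a).tok ∧ a.tok ∈ d.1

def Dom.lam {S : Set (Tok ν)} (A B : Tyx ν) (d : Ctxx ν → Dom S) : Dom S :=
  Dom.mk S fun x => ∃ (Γ : Ctxx ν) (b : Tmx (A :: Γ) B), x = (Tmx.lam b).tok ∧ b.tok ∈ (d Γ).1

def Dom.k (S : Set (Tok ν)) : Dom S :=
  Dom.mk S fun x => ∃ Γ : Ctxx ν, x = (Tmx.k : Tmx Γ .unit).tok

/-- Reification and reflection. -/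
def nbe (S : Set (Tok ν)) : ∀ A : Tyx ν, (Interp (Dom S) A → Dom S) × (Dom S → Interp (Dom S) A)
  | .atom _ => (fun d => d, fun d => d)
  | .unit => (fun _ => Dom.k S, fun _ => ())
  | .arrow A B =>
    (fun f => Dom.lam A B fun Γ => (nbe S B).1 (f ((nbe S A).2 (Dom.newVar S A Γ))),
     fun d v => (nbe S B).2 (Dom.app A B d ((nbe S A).1 v)))
  | .prod A B =>
    (fun v => Dom.pair A B ((nbe S A).1 v.1) ((nbe S B).1 v.2),
     fun d => ((nbe S A).2 (Dom.p1 A B d), (nbe S B).2 (Dom.p2 A B d)))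

/-- `d` uniformly represents the term `t`. -/
def Good {Δ : Ctxx ν} {A : Tyx ν} (t : Tmx Δ A) (d : ∀ S : Set (Tok ν), Dom S) : Prop :=
  ∀ (Γ : Ctxx ν) (e : Extx Δ Γ), ∃ s : Tmx Γ A, Eqvx s (t.ex e) ∧
    ∀ S : Set (Tok ν), SubClosed S → ∀ u : Tmx Γ A, u.tok ∈ S → (u.tok ∈ (d S).1 ↔ u = s)

/-- Kripke logical relation between terms and families of semantic values. -/
def KRel : ∀ (A : Tyx ν) (Δ : Ctxx ν), Tmx Δ A → (∀ S : Set (Tok ν), Interp (Dom S) A) → Prop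
  | .atom _, _, t, d => Good t d
  | .unit, _, _, _ => True
  | .arrow A B, Δ, t, f => ∀ (Γ : Ctxx ν) (e : Extx Δ Γ) (s : Tmx Γ A)
      (v : ∀ S : Set (Tok ν), Interp (Dom S) A), KRel A Γ s v →
      KRel B Γ (.app (t.ex e) s) (fun S => (f S : Interp (Dom S) A → Interp (Dom S) B) (v S))
  | .prod A B, Δ, t, v =>
      KRel A Δ (.p1 t) (fun S => (v S : Interp (Dom S) A × Interp (Dom S) B).1) ∧
      KRel B Δ (.p2 t) (fun S => (v S : Interp (Dom S) A × Interp (Dom S) B).2)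

theorem KRel.eqv : ∀ (A : Tyx ν) {Δ : Ctxx ν} {t t' : Tmx Δ A}
    {v : ∀ S : Set (Tok ν), Interp (Dom S) A}, Eqvx t t' → KRel A Δ t v → KRel A Δ t' v
  | .atom _, _, _, _, _, h, H => by
    intro Γ e
    obtain ⟨s, hs, H⟩ := H Γ e
    exact ⟨s, hs.trans (h.rename _), H⟩
  | .unit, _, _, _, _, _, _ => trivial
  | .arrow A B, _, _, _, _, h, H => fun Γ e s v hv =>
    KRel.eqv B (.congApp (h.rename _) (.refl _)) (H Γ e s v hv)
  | .prod A B, _, _, _, _, h, H => ⟨KRel.eqv A (.congP1 h) H.1, KRel.eqv B (.congP2 h) H.2⟩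

theorem Good.mono {Δ Γ : Ctxx ν} {A : Tyx ν} {t : Tmx Δ A} {d : ∀ S : Set (Tok ν), Dom S}
    (h : Good t d) (e : Extx Δ Γ) : Good (t.ex e) d := by
  intro Θ e'
  rw [← Tmx.ex_trans]
  exact h Θ _

theorem KRel.mono : ∀ (A : Tyx ν) {Δ Γ : Ctxx ν} (e : Extx Δ Γ) {t : Tmx Δ A}
    {v : ∀ S : Set (Tok ν), Interp (Dom S) A}, KRel A Δ t v → KRel A Γ (t.ex e) v
  | .atom _, _, _, e, _, _, H => Good.mono H e
  | .unit, _, _, _, _, _, _ => trivial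
  | .arrow A B, _, _, e, _, _, H => fun Γ e' s v hv => by
    rw [← Tmx.ex_trans]; exact H Γ _ s v hv
  | .prod A B, _, _, e, _, _, H => ⟨KRel.mono A e H.1, KRel.mono B e H.2⟩

theorem Good.newVar (A : Tyx ν) (Γ : Ctxx ν) :
    Good (Tmx.var .vz : Tmx (A :: Γ) A) (fun S => Dom.newVar S A Γ) := by
  intro Θ e
  refine ⟨.var (e.ren A .vz), .refl _, fun S hS u hu => ⟨?_, ?_⟩⟩
  · rintro ⟨-, Θ', e', h⟩
    have : Θ = Θ' := congrArg Sigma.fst h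
    subst this
    rw [Extx.unique e e']
    exact Tmx.tok_inj h
  · rintro rfl
    exact ⟨hu, Θ, e, rfl⟩

theorem Good.app {Δ : Ctxx ν} {A B : Tyx ν} {f : Tmx Δ (.arrow A B)} {a : Tmx Δ A}
    {d d' : ∀ S : Set (Tok ν), Dom S} (h : Good f d) (h' : Good a d') :
    Good (.app f a) (fun S => Dom.app A B (d S) (d' S)) := by
  intro Γ e
  obtain ⟨s, hs, H⟩ := h Γ e
  obtain ⟨s', hs', H'⟩ := h' Γ e
  refine ⟨.app s s', .congApp hs hs', fun S hS u hu => ⟨?_, ?_⟩⟩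
  · rintro ⟨-, Θ', f', a', h1, h2, h3⟩
    have : Γ = Θ' := congrArg Sigma.fst h1
    subst this
    obtain rfl := Tmx.tok_inj h1
    rw [(H S hS _ (hS.app1 hu)).1 h2, (H' S hS _ (hS.app2 hu)).1 h3]
  · rintro rfl
    exact ⟨hu, Γ, s, s', rfl, (H S hS _ (hS.app1 hu)).2 rfl, (H' S hS _ (hS.app2 hu)).2 rfl⟩

theorem Good.pair {Δ : Ctxx ν} {A B : Tyx ν} {c : Tmx Δ (.prod A B)}
    {d d' : ∀ S : Set (Tok ν), Dom S} (h : Good (.p1 c) d) (h' : Good (.p2 c) d') :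
    Good c (fun S => Dom.pair A B (d S) (d' S)) := by
  intro Γ e
  obtain ⟨s, hs, H⟩ := h Γ e
  obtain ⟨s', hs', H'⟩ := h' Γ e
  refine ⟨.pair s s', (Eqvx.congPair hs hs').trans (.prodEta _), fun S hS u hu => ⟨?_, ?_⟩⟩
  · rintro ⟨-, Θ', f', a', h1, h2, h3⟩
    have : Γ = Θ' := congrArg Sigma.fst h1
    subst this
    obtain rfl := Tmx.tok_inj h1
    rw [(H S hS _ (hS.pair1 hu)).1 h2, (H' S hS _ (hS.pair2 hu)).1 h3]
  · rintro rfl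
    exact ⟨hu, Γ, s, s', rfl, (H S hS _ (hS.pair1 hu)).2 rfl, (H' S hS _ (hS.pair2 hu)).2 rfl⟩

theorem Good.p1 {Δ : Ctxx ν} {A B : Tyx ν} {c : Tmx Δ (.prod A B)}
    {d : ∀ S : Set (Tok ν), Dom S} (h : Good c d) :
    Good (.p1 c) (fun S => Dom.p1 A B (d S)) := by
  intro Γ e
  obtain ⟨s, hs, H⟩ := h Γ e
  refine ⟨.p1 s, .congP1 hs, fun S hS u hu => ⟨?_, ?_⟩⟩
  · rintro ⟨-, Θ', f', h1, h2⟩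
    have : Γ = Θ' := congrArg Sigma.fst h1
    subst this
    obtain rfl := Tmx.tok_inj h1
    rw [(H S hS _ (hS.p1 hu)).1 h2]
  · rintro rfl
    exact ⟨hu, Γ, s, rfl, (H S hS _ (hS.p1 hu)).2 rfl⟩

theorem Good.p2 {Δ : Ctxx ν} {A B : Tyx ν} {c : Tmx Δ (.prod A B)}
    {d : ∀ S : Set (Tok ν), Dom S} (h : Good c d) :
    Good (.p2 c) (fun S => Dom.p2 A B (d S)) := by
  intro Γ e
  obtain ⟨s, hs, H⟩ := h Γ e
  refine ⟨.p2 s, .congP2 hs, fun S hS u hu => ⟨?_, ?_⟩⟩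
  · rintro ⟨-, Θ', f', h1, h2⟩
    have : Γ = Θ' := congrArg Sigma.fst h1
    subst this
    obtain rfl := Tmx.tok_inj h1
    rw [(H S hS _ (hS.p2 hu)).1 h2]
  · rintro rfl
    exact ⟨hu, Γ, s, rfl, (H S hS _ (hS.p2 hu)).2 rfl⟩

theorem Good.k {Δ : Ctxx ν} (c : Tmx Δ .unit) : Good c (fun S => Dom.k S) := by
  intro Γ e
  refine ⟨.k, .symm (.unit _), fun S hS u hu => ⟨?_, ?_⟩⟩
  · rintro ⟨-, Θ', h1⟩
    have : Γ = Θ' := congrArg Sigma.fst h1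
    subst this
    exact Tmx.tok_inj h1
  · rintro rfl
    exact ⟨hu, Γ, rfl⟩

theorem Good.lam {Δ : Ctxx ν} {A B : Tyx ν} {f : Tmx Δ (.arrow A B)}
    {d : ∀ S : Set (Tok ν), Ctxx ν → Dom S}
    (h : ∀ (Γ : Ctxx ν) (e : Extx Δ Γ),
      Good (.app (f.ex (.step A e)) (.var .vz)) (fun S => d S Γ)) :
    Good f (fun S => Dom.lam A B (d S)) := by
  intro Γ e
  obtain ⟨s, hs, H⟩ := h Γ e _ .refl
  rw [Tmx.ex_refl] at hs
  refine ⟨.lam s, ?_, fun S hS u hu => ⟨?_, ?_⟩⟩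
  · refine (Eqvx.congLam hs).trans ?_
    have h := Eqvx.eta (f.ex e)
    unfold Tmx.ex at h ⊢
    rw [Tmx.rename_rename] at h
    exact h
  · rintro ⟨-, Θ', f', h1, h2⟩
    have : Γ = Θ' := congrArg Sigma.fst h1
    subst this
    obtain rfl := Tmx.tok_inj h1
    rw [(H S hS _ (hS.lam hu)).1 h2]
  · rintro rfl
    exact ⟨hu, Γ, s, rfl, (H S hS _ (hS.lam hu)).2 rfl⟩

theorem KRel.nbe : ∀ (A : Tyx ν),
    (∀ {Δ : Ctxx ν} {t : Tmx Δ A} {v : ∀ S : Set (Tok ν), Interp (Dom S) A},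
      KRel A Δ t v → Good t (fun S => (nbe S A).1 (v S))) ∧
    (∀ {Δ : Ctxx ν} {t : Tmx Δ A} {d : ∀ S : Set (Tok ν), Dom S},
      Good t d → KRel A Δ t (fun S => (nbe S A).2 (d S)))
  | .atom _ => ⟨fun h => h, fun h => h⟩
  | .unit => ⟨fun _ => Good.k _, fun _ => trivial⟩
  | .arrow A B => by
    refine ⟨fun {Δ t v} h => ?_, fun {Δ t d} h => ?_⟩
    · exact Good.lam fun Γ e => (KRel.nbe B).1 (h _ (.step A e) _ _ ((KRel.nbe A).2 (Good.newVar A Γ)))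
    · intro Γ e s v hv
      exact (KRel.nbe B).2 ((h.mono e).app ((KRel.nbe A).1 hv))
  | .prod A B => by
    refine ⟨fun {Δ t v} h => ?_, fun {Δ t d} h => ?_⟩
    · exact Good.pair ((KRel.nbe A).1 h.1) ((KRel.nbe B).1 h.2)
    · exact ⟨(KRel.nbe A).2 h.p1, (KRel.nbe B).2 h.p2⟩

theorem KRel.fund {Γ : Ctxx ν} {A : Tyx ν} (t : Tmx Γ A) :
    ∀ {Δ : Ctxx ν} (σ : Substx Γ Δ) (η : ∀ S : Set (Tok ν), Envx (Dom S) Γ),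
      (∀ (B : Tyx ν) (v : Varx Γ B), KRel B Δ (σ B v) (fun S => η S B v)) →
      KRel A Δ (t.subst σ) (fun S => t.eval (Dom S) (η S)) := by
  induction t with
  | var v => intro Δ σ η h; exact h _ v
  | app f a ihf iha =>
    intro Δ σ η h
    have H := ihf σ η h Δ .refl _ _ (iha σ η h)
    rw [Tmx.ex_refl] at H
    exact H
  | @lam Γ A B b ih =>
    intro Δ σ η h Θ e s v hv
    refine KRel.eqv _ (.symm (.trans (.beta _ _) ?_))
      (ih (Substx.cons s (fun C w => (σ C w).ex e)) (fun S => Envx.cons (v S) (η S)) ?_)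
    · rw [Tmx.rename_subst, Substx.ren_ext, Tmx.ext_subst1]
      exact .refl _
    · intro C w
      cases w with
      | vz => exact hv
      | vs w => exact KRel.mono C e (h C w)
  | pair a b iha ihb =>
    intro Δ σ η h
    exact ⟨KRel.eqv _ (.symm (.prodBeta1 _ _)) (iha σ η h),
      KRel.eqv _ (.symm (.prodBeta2 _ _)) (ihb σ η h)⟩
  | p1 a ih => intro Δ σ η h; exact (ih σ η h).1
  | p2 a ih => intro Δ σ η h; exact (ih σ η h).2
  | k => intros; trivial

theorem finite_completeness {A : Tyx ν} (a b : Tmx ([] : Ctxx ν) A) (hne : ¬ Eqvx a b) :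
    ∃ X : Type, Finite X ∧ a.eval X (Envx.nil X) ≠ b.eval X (Envx.nil X) := by
  have key : ∀ c : Tmx ([] : Ctxx ν) A,
      Good c (fun S => (nbe S A).1 (c.eval (Dom S) (Envx.nil _))) := by
    intro c
    have h := KRel.fund c (fun _ v => .var v) (fun S => Envx.nil (Dom S)) (fun _ v => v.elim0)
    rw [Tmx.subst_id] at h
    exact (KRel.nbe A).1 h
  obtain ⟨s, hs, H⟩ := key a [] .refl
  obtain ⟨s', hs', H'⟩ := key b [] .refl
  rw [Tmx.ex_refl] at hs hs'
  obtain ⟨S, fS, cS, mS⟩ := exists_subClosed s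
  refine ⟨Dom S, Dom.finite fS, fun heq => hne ?_⟩
  have h1 := (H S cS s mS).2 rfl
  dsimp only at h1
  rw [heq] at h1
  have h2 := (H' S cS s mS).1 h1
  subst h2
  exact hs.symm.trans hs'

end Complete

/-! ### Definability over finite models -/

section Definable
variable {ν : Type}

abbrev BoolTy (p : ν) : Tyx ν := .arrow (.atom p) (.arrow (.atom p) (.atom p))

def ttx (p : ν) : Tmx ([] : Ctxx ν) (BoolTy p) := .lam (.lam (.var (.vs .vz)))
def ffx (p : ν) : Tmx ([] : Ctxx ν) (BoolTy p) := .lam (.lam (.var .vz))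

/-- A coding of a finite set by closed terms, with definable tests and conditionals. -/
structure Coding (p : ν) (τ : Tyx ν) (X : Type) where
  r : Tmx ([] : Ctxx ν) τ → X → Prop
  fin : Finite X
  eqv : ∀ {t t' : Tmx [] τ} {x : X}, Eqvx t t' → r t x → r t' x
  inh : Nonempty (Tmx ([] : Ctxx ν) τ)
  const : ∀ x : X, ∃ t, r t x
  test : ∀ x : X, ∃ E : Tmx ([] : Ctxx ν) (.arrow τ (BoolTy p)), ∀ t y, r t y →
    (x = y → Eqvx (.app E t) (ttx p)) ∧ (x ≠ y → Eqvx (.app E t) (ffx p))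
  ite : ∃ I : Tmx ([] : Ctxx ν) (.arrow (BoolTy p) (.arrow τ (.arrow τ τ))),
    ∀ (Δ : Ctxx ν) (t s : Tmx Δ τ), Eqvx (.app (.app (.app I.wk (ttx p).wk) t) s) t ∧
      Eqvx (.app (.app (.app I.wk (ffx p).wk) t) s) s

theorem Coding.ite0 {p : ν} {τ : Tyx ν} {X : Type} (c : Coding p τ X) :
    ∃ I : Tmx ([] : Ctxx ν) (.arrow (BoolTy p) (.arrow τ (.arrow τ τ))), ∀ t s,
    Eqvx (.app (.app (.app I (ttx p)) t) s) t ∧ Eqvx (.app (.app (.app I (ffx p)) t) s) s := by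
  obtain ⟨I, hI⟩ := c.ite
  refine ⟨I, fun t s => ?_⟩
  have h := hI [] t s
  simp only [Tmx.wk_nil] at h
  exact h

theorem beta_to {Γ : Ctxx ν} {A B : Tyx ν} {a : Tmx (A :: Γ) B} {b : Tmx Γ A} {c : Tmx Γ B}
    (h : a.subst1 b = c) : Eqvx (.app (.lam a) b) c := h ▸ .beta a b

theorem beta2_to {Γ : Ctxx ν} {A B C : Tyx ν} {a : Tmx (B :: A :: Γ) C} {b : Tmx Γ A}
    {b' : Tmx Γ B} {c : Tmx Γ C}
    (h : a.subst (Substx.cons b' (Substx.cons b fun _ v => .var v)) = c) :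
    Eqvx (.app (.app (.lam (.lam a)) b) b') c := by
  refine .trans (.congApp (.beta _ _) (.refl _)) ?_
  refine beta_to ?_
  rw [← h]
  exact Tmx.ext_subst1 _ _ _

theorem beta3_to {Γ : Ctxx ν} {A B C D : Tyx ν} {a : Tmx (C :: B :: A :: Γ) D} {b : Tmx Γ A}
    {b' : Tmx Γ B} {b'' : Tmx Γ C} {c : Tmx Γ D}
    (h : a.subst (Substx.cons b'' (Substx.cons b' (Substx.cons b fun _ v => .var v))) = c) :
    Eqvx (.app (.app (.app (.lam (.lam (.lam a))) b) b') b'') c := by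
  refine .trans (.congApp (.congApp (.beta _ _) (.refl _)) (.refl _)) ?_
  simp only [Tmx.subst1, Tmx.subst]
  refine beta2_to ?_
  rw [← h, Tmx.subst_subst]
  congr 1
  funext E v
  cases v with
  | vz => rfl
  | vs v =>
    cases v with
    | vz => rfl
    | vs v =>
      simp only [Substx.ext, Substx.cons, Tmx.subst_rename]
      exact Tmx.subst_id _

def codingUnit (p : ν) : Coding p .unit Unit where
  r := fun _ _ => True
  fin := inferInstance
  eqv := fun _ _ => trivial
  inh := ⟨.k⟩
  const := fun _ => ⟨.k, trivial⟩
  test := fun _ => ⟨.lam (ttx p).wk, fun t y _ =>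
    ⟨fun _ => beta_to (by simp only [Tmx.subst1, Tmx.wk_subst, Tmx.wk_nil]),
      fun h => absurd rfl h⟩⟩
  ite := ⟨.lam (.lam (.lam .k)), fun _ t s => ⟨.trans (.unit _) (.symm (.unit _)),
    .trans (.unit _) (.symm (.unit _))⟩⟩

def codingBool (p : ν) : Coding p (BoolTy p) Bool where
  r := fun t b => Eqvx t (if b then ttx p else ffx p)
  fin := inferInstance
  eqv := fun h H => h.symm.trans H
  inh := ⟨ttx p⟩
  const := fun _ => ⟨_, .refl _⟩
  test := by
    intro x
    cases x with
    | true =>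
      refine ⟨.lam (.var .vz), fun t y h => ?_⟩
      have H : Eqvx (.app (.lam (.var .vz)) t) t := beta_to rfl
      constructor
      · rintro rfl; exact H.trans h
      · intro hy
        cases y
        · exact H.trans h
        · exact absurd rfl hy
    | false =>
      refine ⟨.lam (.lam (.lam (.app (.app (.var (.vs (.vs .vz))) (.var .vz)) (.var (.vs .vz))))),
        fun t y h => ?_⟩
      have H : ∀ b : Tmx [] (BoolTy p), Eqvx (.app (.lam (.lam (.lam (.app (.app (.var (.vs (.vs .vz))) (.var .vz)) (.var (.vs .vz)))))) b)
        (.lam (.lam (.app (.app b.wk (.var .vz)) (.var (.vs .vz))))) := by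
        intro b
        refine beta_to ?_
        simp only [Tmx.subst1, Tmx.subst, Substx.ext, Substx.cons, Tmx.rename, Tmx.rename_closed, Tmx.wk_rename]
      have H := (Eqvx.congApp (.refl (.lam (.lam (.lam (.app (.app (.var (.vs (.vs .vz))) (.var .vz)) (.var (.vs .vz))))))) h).trans (H _)
      constructor
      · rintro rfl
        exact H.trans (.congLam (.congLam (beta2_to rfl)))
      · intro hy
        cases y
        · exact absurd rfl hy
        · exact H.trans (.congLam (.congLam (beta2_to rfl)))
  ite := by
    refine ⟨.lam (.lam (.lam (.lam (.lam (.app (.app (.var (.vs (.vs (.vs (.vs .vz)))))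
      (.app (.app (.var (.vs (.vs (.vs .vz)))) (.var (.vs .vz))) (.var .vz)))
      (.app (.app (.var (.vs (.vs .vz))) (.var (.vs .vz))) (.var .vz))))))), fun Δ t s => ?_⟩
    have eta2 : ∀ {Δ : Ctxx ν} (t : Tmx Δ (BoolTy p)),
        Eqvx (.lam (.lam (.app (.app ((t.rename (fun _ => Varx.vs)).rename (fun _ => Varx.vs))
          (.var (.vs .vz))) (.var .vz)))) t := by
      intro Δ t
      exact (Eqvx.congLam (Eqvx.eta _)).trans (Eqvx.eta t)
    constructor
    · refine .trans (beta3_to rfl) (.trans ?_ (eta2 t))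
      simp only [Tmx.rename, Renx.ext, Tmx.subst, Substx.ext, Substx.cons, Tmx.wk_rename]
      exact .congLam (.congLam (beta2_to rfl))
    · refine .trans (beta3_to rfl) (.trans ?_ (eta2 s))
      simp only [Tmx.rename, Renx.ext, Tmx.subst, Substx.ext, Substx.cons, Tmx.wk_rename]
      exact .congLam (.congLam (beta2_to rfl))

/-- Definable conjunction. -/
theorem exists_and (p : ν) {τ : Tyx ν} (E F : Tmx ([] : Ctxx ν) (.arrow τ (BoolTy p))) :
    ∃ G : Tmx ([] : Ctxx ν) (.arrow τ (BoolTy p)), ∀ t,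
      (Eqvx (.app E t) (ttx p) → Eqvx (.app F t) (ttx p) → Eqvx (.app G t) (ttx p)) ∧
      (Eqvx (.app E t) (ttx p) → Eqvx (.app F t) (ffx p) → Eqvx (.app G t) (ffx p)) ∧
      (Eqvx (.app E t) (ffx p) → Eqvx (.app G t) (ffx p)) := by
  obtain ⟨I, hI⟩ := (codingBool p).ite0
  refine ⟨.lam (.app (.app (.app I.wk (.app E.wk (.var .vz))) (.app F.wk (.var .vz))) (ffx p).wk),
    fun t => ?_⟩
  have H : Eqvx (.app (.lam (.app (.app (.app I.wk (.app E.wk (.var .vz)))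
      (.app F.wk (.var .vz))) (ffx p).wk)) t)
      (.app (.app (.app I (.app E t)) (.app F t)) (ffx p)) := by
    refine beta_to ?_
    simp only [Tmx.subst1, Tmx.subst, Tmx.wk_subst, Tmx.wk_nil, Substx.cons]
  refine ⟨fun h1 h2 => ?_, fun h1 h2 => ?_, fun h1 => ?_⟩
  · exact (H.trans (.congApp (.congApp (.congApp (.refl _) h1) h2) (.refl _))).trans (hI _ _).1
  · exact (H.trans (.congApp (.congApp (.congApp (.refl _) h1) h2) (.refl _))).trans (hI _ _).1
  · exact (H.trans (.congApp (.congApp (.congApp (.refl _) h1) (.refl _)) (.refl _))).trans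
      (hI _ _).2

/-- Composition of closed terms. -/
theorem exists_comp {A B C : Tyx ν} (f : Tmx ([] : Ctxx ν) (.arrow B C))
    (b : Tmx [A] B) : ∃ g : Tmx ([] : Ctxx ν) (.arrow A C),
    ∀ t, Eqvx (.app g t) (.app f (b.subst1 t)) := by
  refine ⟨.lam (.app f.wk b), fun t => beta_to ?_⟩
  simp only [Tmx.subst1, Tmx.subst, Tmx.wk_subst, Tmx.wk_nil]

def codingProd {p : ν} {τ τ' : Tyx ν} {X Y : Type} (c : Coding p τ X) (c' : Coding p τ' Y) :
    Coding p (.prod τ τ') (X × Y) where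
  r := fun t x => c.r (.p1 t) x.1 ∧ c'.r (.p2 t) x.2
  fin := by have := c.fin; have := c'.fin; infer_instance
  eqv := fun h H => ⟨c.eqv (.congP1 h) H.1, c'.eqv (.congP2 h) H.2⟩
  inh := by
    obtain ⟨t⟩ := c.inh
    obtain ⟨s⟩ := c'.inh
    exact ⟨.pair t s⟩
  const := by
    rintro ⟨x, y⟩
    obtain ⟨t, ht⟩ := c.const x
    obtain ⟨s, hs⟩ := c'.const y
    exact ⟨.pair t s, c.eqv (.symm (.prodBeta1 _ _)) ht, c'.eqv (.symm (.prodBeta2 _ _)) hs⟩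
  test := by
    rintro ⟨x, y⟩
    obtain ⟨E, hE⟩ := c.test x
    obtain ⟨F, hF⟩ := c'.test y
    obtain ⟨E', hE'⟩ := exists_comp E (.p1 (.var .vz) : Tmx [.prod τ τ'] τ)
    obtain ⟨F', hF'⟩ := exists_comp F (.p2 (.var .vz) : Tmx [.prod τ τ'] τ')
    obtain ⟨G, hG⟩ := exists_and p E' F'
    refine ⟨G, ?_⟩
    rintro t ⟨x', y'⟩ ⟨h1, h2⟩
    have hE := hE _ _ h1
    have hF := hF _ _ h2
    have hE' := hE' t
    have hF' := hF' t
    obtain ⟨g1, g2, g3⟩ := hG t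
    constructor
    · intro h
      cases h
      exact g1 (hE'.trans (hE.1 rfl)) (hF'.trans (hF.1 rfl))
    · intro h
      by_cases hx : x = x'
      · have hy : y ≠ y' := fun hy => h (by rw [hx, hy])
        exact g2 (hE'.trans (hE.1 hx)) (hF'.trans (hF.2 hy))
      · exact g3 (hE'.trans (hE.2 hx))
  ite := by
    obtain ⟨I, hI⟩ := c.ite
    obtain ⟨J, hJ⟩ := c'.ite
    refine ⟨.lam (.lam (.lam (.pair
      (.app (.app (.app I.wk (.var (.vs (.vs .vz)))) (.p1 (.var (.vs .vz)))) (.p1 (.var .vz)))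
      (.app (.app (.app J.wk (.var (.vs (.vs .vz)))) (.p2 (.var (.vs .vz)))) (.p2 (.var .vz)))))),
      fun Δ t s => ⟨?_, ?_⟩⟩
    · refine .trans (beta3_to rfl) ?_
      simp only [Tmx.rename, Renx.ext, Tmx.subst, Substx.cons, Tmx.wk_rename, Tmx.wk_subst]
      exact .trans (.congPair (hI _ _ _).1 (hJ _ _ _).1) (.prodEta _)
    · refine .trans (beta3_to rfl) ?_
      simp only [Tmx.rename, Renx.ext, Tmx.subst, Substx.cons, Tmx.wk_rename, Tmx.wk_subst]
      exact .trans (.congPair (hI _ _ _).2 (hJ _ _ _).2) (.prodEta _)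

theorem exists_fun {p : ν} {τ τ' : Tyx ν} {X Y : Type} (c : Coding p τ X) (c' : Coding p τ' Y)
    (g : X → Y) (l : List X) : ∃ F : Tmx ([] : Ctxx ν) (.arrow τ τ'),
      ∀ t x, c.r t x → x ∈ l → c'.r (.app F t) (g x) := by
  induction l with
  | nil =>
    obtain ⟨s⟩ := c'.inh
    exact ⟨.lam s.wk, fun t x _ h => by cases h⟩
  | cons x0 l ih =>
    obtain ⟨F, hF⟩ := ih
    obtain ⟨E, hE⟩ := c.test x0
    obtain ⟨s, hs⟩ := c'.const (g x0)
    obtain ⟨I, hI⟩ := c'.ite0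
    refine ⟨.lam (.app (.app (.app I.wk (.app E.wk (.var .vz))) s.wk) (.app F.wk (.var .vz))),
      fun t x h hx => ?_⟩
    have H : Eqvx (.app (.lam (.app (.app (.app I.wk (.app E.wk (.var .vz))) s.wk)
        (.app F.wk (.var .vz)))) t) (.app (.app (.app I (.app E t)) s) (.app F t)) := by
      refine beta_to ?_
      simp only [Tmx.subst1, Tmx.subst, Tmx.wk_subst, Tmx.wk_nil, Substx.cons]
    by_cases h0 : x0 = x
    · subst h0
      refine c'.eqv (.symm (H.trans (.trans ?_ (hI s (.app F t)).1))) hs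
      exact .congApp (.congApp (.congApp (.refl _) ((hE _ _ h).1 rfl)) (.refl _)) (.refl _)
    · have hx' : x ∈ l := by
        rcases List.mem_cons.1 hx with h' | h'
        · exact absurd h'.symm h0
        · exact h'
      refine c'.eqv (.symm (H.trans (.trans ?_ (hI s (.app F t)).2))) (hF _ _ h hx')
      exact .congApp (.congApp (.congApp (.refl _) ((hE _ _ h).2 h0)) (.refl _)) (.refl _)

theorem exists_funTest {p : ν} {τ τ' : Tyx ν} {X Y : Type} (c : Coding p τ X)
    (c' : Coding p τ' Y) (g : X → Y) (l : List X) :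
    ∃ E : Tmx ([] : Ctxx ν) (.arrow (.arrow τ τ') (BoolTy p)),
      ∀ t (h : X → Y), (∀ s x, c.r s x → c'.r (.app t s) (h x)) →
        ((∀ x ∈ l, g x = h x) → Eqvx (.app E t) (ttx p)) ∧
        (¬ (∀ x ∈ l, g x = h x) → Eqvx (.app E t) (ffx p)) := by
  induction l with
  | nil =>
    refine ⟨.lam (ttx p).wk, fun t h _ => ⟨fun _ => beta_to ?_, fun h => ?_⟩⟩
    · simp only [Tmx.subst1, Tmx.wk_subst, Tmx.wk_nil]
    · exact absurd (fun x hx => by cases hx) h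
  | cons x0 l ih =>
    obtain ⟨F, hF⟩ := ih
    obtain ⟨E, hE⟩ := c'.test (g x0)
    obtain ⟨s, hs⟩ := c.const x0
    obtain ⟨E', hE'⟩ := exists_comp E (.app (.var .vz) s.wk : Tmx [.arrow τ τ'] τ')
    obtain ⟨G, hG⟩ := exists_and p E' F
    refine ⟨G, fun t h ht => ?_⟩
    have hE' := hE' t
    simp only [Tmx.subst1, Tmx.subst, Tmx.wk_subst, Tmx.wk_nil, Substx.cons] at hE'
    have hE := hE _ _ (ht _ _ hs)
    have hF := hF t h ht
    obtain ⟨g1, g2, g3⟩ := hG t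
    simp only [List.forall_mem_cons]
    constructor
    · rintro ⟨h1, h2⟩
      exact g1 (hE'.trans (hE.1 h1)) (hF.1 h2)
    · intro hn
      by_cases hx : g x0 = h x0
      · exact g2 (hE'.trans (hE.1 hx)) (hF.2 fun h2 => hn ⟨hx, h2⟩)
      · exact g3 (hE'.trans (hE.2 hx))

theorem exists_list {X : Type} (h : Finite X) : ∃ l : List X, ∀ x, x ∈ l := by
  have := Fintype.ofFinite X
  exact ⟨Finset.univ.toList, fun x => by simp⟩

def codingArrow {p : ν} {τ τ' : Tyx ν} {X Y : Type} (c : Coding p τ X) (c' : Coding p τ' Y) :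
    Coding p (.arrow τ τ') (X → Y) where
  r := fun t g => ∀ s x, c.r s x → c'.r (.app t s) (g x)
  fin := by have := c.fin; have := c'.fin; infer_instance
  eqv := fun h H s x hs => c'.eqv (.congApp h (.refl _)) (H s x hs)
  inh := by
    obtain ⟨s⟩ := c'.inh
    exact ⟨.lam s.wk⟩
  const := by
    intro g
    obtain ⟨l, hl⟩ := exists_list c.fin
    obtain ⟨F, hF⟩ := exists_fun c c' g l
    exact ⟨F, fun s x h => hF s x h (hl x)⟩
  test := by
    intro g
    obtain ⟨l, hl⟩ := exists_list c.fin
    obtain ⟨E, hE⟩ := exists_funTest c c' g l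
    refine ⟨E, fun t h ht => ⟨fun hg => (hE t h ht).1 fun x _ => by rw [hg], fun hg => ?_⟩⟩
    exact (hE t h ht).2 fun H => hg (funext fun x => H x (hl x))
  ite := by
    obtain ⟨J, hJ⟩ := c'.ite
    refine ⟨.lam (.lam (.lam (.lam (.app (.app (.app J.wk (.var (.vs (.vs (.vs .vz)))))
      (.app (.var (.vs (.vs .vz))) (.var .vz))) (.app (.var (.vs .vz)) (.var .vz)))))),
      fun Δ t s => ⟨?_, ?_⟩⟩
    · refine .trans (beta3_to rfl) ?_
      simp only [Tmx.rename, Renx.ext, Tmx.subst, Substx.ext, Substx.cons, Tmx.wk_rename,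
        Tmx.wk_subst]
      exact .trans (.congLam (hJ _ _ _).1) (.eta _)
    · refine .trans (beta3_to rfl) ?_
      simp only [Tmx.rename, Renx.ext, Tmx.subst, Substx.ext, Substx.cons, Tmx.wk_rename,
        Tmx.wk_subst]
      exact .trans (.congLam (hJ _ _ _).2) (.eta _)

def codingInj {p : ν} {τ : Tyx ν} {X Y : Type} (c : Coding p τ Y) (f : X → Y)
    (hf : Function.Injective f) : Coding p τ X where
  r := fun t x => c.r t (f x)
  fin := by have := c.fin; exact Finite.of_injective f hf
  eqv := fun h H => c.eqv h H
  inh := c.inh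
  const := fun x => c.const (f x)
  test := by
    intro x
    obtain ⟨E, hE⟩ := c.test (f x)
    exact ⟨E, fun t y h => ⟨fun e => (hE t _ h).1 (by rw [e]), fun e => (hE t _ h).2 (hf.ne e)⟩⟩
  ite := c.ite

theorem exists_codingPow (p : ν) (n : ℕ) :
    ∃ τ : Tyx ν, Nonempty (Coding p τ (Fin n → Bool)) := by
  induction n with
  | zero => exact ⟨_, ⟨codingInj (codingUnit p) (fun _ => ()) fun f g _ => Subsingleton.elim f g⟩⟩
  | succ n ih =>
    obtain ⟨τ, ⟨c⟩⟩ := ih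
    refine ⟨_, ⟨codingInj (codingProd (codingBool p) c) (fun f => (f 0, fun i => f i.succ)) ?_⟩⟩
    intro f g h
    simp only [Prod.mk.injEq] at h
    funext i
    refine Fin.cases h.1 (fun j => congrFun h.2 j) i

theorem exists_coding (p : ν) (X : Type) [Finite X] :
    ∃ τ : Tyx ν, Nonempty (Coding p τ X) := by
  obtain ⟨n, ⟨e⟩⟩ := Finite.exists_equiv_fin X
  obtain ⟨τ, ⟨c⟩⟩ := exists_codingPow p n
  refine ⟨τ, ⟨codingInj c (fun x i => decide (e x = i)) ?_⟩⟩
  intro x y h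
  have := congrFun h (e y)
  simpa using this

def codeTy {p : ν} {τ : Tyx ν} {X : Type} (c : Coding p τ X) :
    ∀ A : Tyx ν, Coding p (A.substA fun _ => τ) (Interp X A)
  | .atom _ => c
  | .unit => codingUnit p
  | .arrow A B => codingArrow (codeTy c A) (codeTy c B)
  | .prod A B => codingProd (codeTy c A) (codeTy c B)

theorem codeTy_fund {p : ν} {τ : Tyx ν} {X : Type} (c : Coding p τ X) {Γ : Ctxx ν} {A : Tyx ν}
    (t : Tmx Γ A) : ∀ (γ : Substx (Γ.map (Tyx.substA fun _ => τ)) []) (η : Envx X Γ),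
      (∀ (B : Tyx ν) (v : Varx Γ B), (codeTy c B).r (γ _ (v.substA _)) (η B v)) →
      (codeTy c A).r ((t.substA fun _ => τ).subst γ) (t.eval X η) := by
  induction t with
  | var v => intro γ η h; exact h _ v
  | app f a ihf iha => intro γ η h; exact ihf γ η h _ _ (iha γ η h)
  | @lam Γ A B b ih =>
    intro γ η h s x hs
    refine (codeTy c B).eqv (.symm (beta_to (Tmx.ext_subst1 _ _ _)))
      (ih (Substx.cons s γ) (Envx.cons x η) ?_)
    intro C w
    cases w with
    | vz => exact hs
    | vs w => exact h C w
  | @pair Γ A B a b iha ihb =>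
    intro γ η h
    exact ⟨(codeTy c A).eqv (.symm (.prodBeta1 _ _)) (iha γ η h),
      (codeTy c B).eqv (.symm (.prodBeta2 _ _)) (ihb γ η h)⟩
  | p1 a ih => intro γ η h; exact (ih γ η h).1
  | p2 a ih => intro γ η h; exact (ih γ η h).2
  | k => intros; trivial

end Definable

/--
**Theorem 9.2.** If `a` and `b` are closed terms of Λ× of the same type and `a = b` is
not provable in Λ×, then one can construct type-instances `a′` and `b′` of `a` and `b`
respectively, closed terms `h, h₁, …, h_l` (`l ≥ 0`), and find a natural number `i`
such that, for a variable `x : p × p` (`p` an atomic type), the equalities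
`π^i(h a′)h₁…h_l (p¹x)(p²x) = p¹x` and `π^i(h b′)h₁…h_l (p¹x)(p²x) = p²x` are provable
in Λ×.
-/
theorem boehm_lambda_products_closed {ν : Type} {A : Tyx ν}
    (a b : Tmx ([] : Ctxx ν) A) (hne : ¬ Eqvx a b) (p : ν) :
    ∃ (σ : ν → Tyx ν) (G : Tyx ν)
      (h : Tmx ([] : Ctxx ν) (Tyx.arrow (A.substA σ) G))
      (Bs : List (Tyx ν)) (hs : HListx ([] : Ctxx ν) Bs) (n i : ℕ)
      (ua ub : Tmx ([] : Ctxx ν)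
        (Tyx.arrsR Bs (Tyx.arrow (.atom p) (Tyx.arrow (.atom p) (.atom p))))),
      PiStep n i (h.app (a.substA σ)) ua ∧
      PiStep n i (h.app (b.substA σ)) ub ∧
      Eqvx (((ua.apps hs).wk.app (.p1 (.var .vz))).app (.p2 (.var .vz))
              : Tmx [Tyx.prod (.atom p) (.atom p)] (.atom p))
           (.p1 (.var .vz)) ∧
      Eqvx (((ub.apps hs).wk.app (.p1 (.var .vz))).app (.p2 (.var .vz))
              : Tmx [Tyx.prod (.atom p) (.atom p)] (.atom p))
           (.p2 (.var .vz)) := by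
  obtain ⟨X, hX, hab⟩ := finite_completeness a b hne
  obtain ⟨τ, ⟨c⟩⟩ := exists_coding p X
  obtain ⟨E, hE⟩ := (codeTy c A).test (a.eval X (Envx.nil X))
  have key : ∀ d : Tmx ([] : Ctxx ν) A,
      (codeTy c A).r (d.substA fun _ => τ) (d.eval X (Envx.nil X)) := by
    intro d
    have h := codeTy_fund c d (fun _ v => .var v) (Envx.nil X) (fun _ v => v.elim0)
    rw [Tmx.subst_id] at h
    exact h
  refine ⟨fun _ => τ, BoolTy p, E, [], .nil, 1, 1, E.app (a.substA _), E.app (b.substA _),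
    .one _, .one _, ?_, ?_⟩
  · have h := (hE _ _ (key a)).1 rfl
    exact .trans (.congApp (.congApp (h.rename _) (.refl _)) (.refl _)) (beta2_to rfl)
  · have h := (hE _ _ (key b)).2 hab
    exact .trans (.congApp (.congApp (h.rename _) (.refl _)) (.refl _)) (beta2_to rfl)
end

section
/- If a = b is a formula of Λ× (a and b terms of the same type) that is not provable in Λ×, then in Λ× extended with a = b as a new axiom schema, every formula c = d (with c and d terms of the same type) is provable. -/
set_option autoImplicit false

/--
The theory Λ× extended with `a₀ = b₀` as a new axiom schema: atomic types are treated
as variables, so every pair of corresponding type-instances of `a₀` and `b₀` is an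
axiom (and, the free variables of an axiom being ordinary variables, so is every
substitution instance of such a pair, which is anyhow derivable by (β) and
replacement).
-/
inductive EqvxExt {ν : Type} {Γ₀ : Ctxx ν} {A₀ : Tyx ν} (a₀ b₀ : Tmx Γ₀ A₀) :
    ∀ {Γ : Ctxx ν} {A : Tyx ν}, Tmx Γ A → Tmx Γ A → Prop
  | refl {Γ : Ctxx ν} {A : Tyx ν} (a : Tmx Γ A) : EqvxExt a₀ b₀ a a
  | symm {Γ : Ctxx ν} {A : Tyx ν} {a b : Tmx Γ A} : EqvxExt a₀ b₀ a b → EqvxExt a₀ b₀ b a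
  | trans {Γ : Ctxx ν} {A : Tyx ν} {a b c : Tmx Γ A} :
      EqvxExt a₀ b₀ a b → EqvxExt a₀ b₀ b c → EqvxExt a₀ b₀ a c
  | congApp {Γ : Ctxx ν} {A B : Tyx ν} {f g : Tmx Γ (Tyx.arrow A B)} {a b : Tmx Γ A} :
      EqvxExt a₀ b₀ f g → EqvxExt a₀ b₀ a b → EqvxExt a₀ b₀ (.app f a) (.app g b)
  | congLam {Γ : Ctxx ν} {A B : Tyx ν} {a b : Tmx (A :: Γ) B} :
      EqvxExt a₀ b₀ a b → EqvxExt a₀ b₀ (.lam a) (.lam b)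
  | congPair {Γ : Ctxx ν} {A B : Tyx ν} {a a' : Tmx Γ A} {b b' : Tmx Γ B} :
      EqvxExt a₀ b₀ a a' → EqvxExt a₀ b₀ b b' → EqvxExt a₀ b₀ (.pair a b) (.pair a' b')
  | congP1 {Γ : Ctxx ν} {A B : Tyx ν} {a b : Tmx Γ (Tyx.prod A B)} :
      EqvxExt a₀ b₀ a b → EqvxExt a₀ b₀ (.p1 a) (.p1 b)
  | congP2 {Γ : Ctxx ν} {A B : Tyx ν} {a b : Tmx Γ (Tyx.prod A B)} :
      EqvxExt a₀ b₀ a b → EqvxExt a₀ b₀ (.p2 a) (.p2 b)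
  | beta {Γ : Ctxx ν} {A B : Tyx ν} (a : Tmx (A :: Γ) B) (b : Tmx Γ A) :
      EqvxExt a₀ b₀ (.app (.lam a) b) (a.subst1 b)
  | eta {Γ : Ctxx ν} {A B : Tyx ν} (a : Tmx Γ (Tyx.arrow A B)) :
      EqvxExt a₀ b₀ (.lam (.app (a.rename (fun _ => Varx.vs)) (.var .vz))) a
  | prodBeta1 {Γ : Ctxx ν} {A B : Tyx ν} (a : Tmx Γ A) (b : Tmx Γ B) :
      EqvxExt a₀ b₀ (.p1 (.pair a b)) a
  | prodBeta2 {Γ : Ctxx ν} {A B : Tyx ν} (a : Tmx Γ A) (b : Tmx Γ B) :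
      EqvxExt a₀ b₀ (.p2 (.pair a b)) b
  | prodEta {Γ : Ctxx ν} {A B : Tyx ν} (c : Tmx Γ (Tyx.prod A B)) :
      EqvxExt a₀ b₀ (.pair (.p1 c) (.p2 c)) c
  | unit {Γ : Ctxx ν} (a : Tmx Γ Tyx.unit) : EqvxExt a₀ b₀ a .k
  | ax (σ : ν → Tyx ν) {Δ : Ctxx ν} (su : Substx (Γ₀.map (Tyx.substA σ)) Δ) :
      EqvxExt a₀ b₀ ((a₀.substA σ).subst su) ((b₀.substA σ).subst su)


namespace MaxL

/-! ### Renaming and substitution -/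

section Syn
variable {ν : Type}

theorem ren_ext_id {Γ : Ctxx ν} (A : Tyx ν) :
    Renx.ext (fun _ v => v : Renx Γ Γ) A = fun _ v => v := by
  funext B v; cases v <;> rfl

theorem rename_id {Γ : Ctxx ν} {A : Tyx ν} (t : Tmx Γ A) : t.rename (fun _ v => v) = t := by
  induction t with
  | lam b ih => simp only [Tmx.rename, ren_ext_id, ih]
  | _ => simp_all [Tmx.rename]

theorem ren_ext_comp {Γ Δ Θ : Ctxx ν} (ρ : Renx Γ Δ) (ρ' : Renx Δ Θ) (A : Tyx ν) :
    (fun B v => Renx.ext ρ' A B (Renx.ext ρ A B v)) =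
      Renx.ext (fun B v => ρ' B (ρ B v) : Renx Γ Θ) A := by
  funext B v; cases v <;> rfl

theorem rename_rename {Γ Δ Θ : Ctxx ν} {A : Tyx ν} (t : Tmx Γ A) (ρ : Renx Γ Δ) (ρ' : Renx Δ Θ) :
    (t.rename ρ).rename ρ' = t.rename (fun B v => ρ' B (ρ B v)) := by
  induction t generalizing Δ Θ with
  | lam b ih => simp only [Tmx.rename, ih, ← ren_ext_comp]
  | _ => simp_all [Tmx.rename]

theorem subst_rename {Γ Δ Θ : Ctxx ν} {A : Tyx ν} (t : Tmx Γ A) (ρ : Renx Γ Δ)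
    (σ : Substx Δ Θ) :
    (t.rename ρ).subst σ = t.subst (fun B v => σ B (ρ B v)) := by
  induction t generalizing Δ Θ with
  | lam b ih =>
    simp only [Tmx.rename, Tmx.subst, ih]
    congr 2; funext B v; cases v <;> rfl
  | _ => simp_all [Tmx.rename, Tmx.subst]

theorem rename_subst {Γ Δ Θ : Ctxx ν} {A : Tyx ν} (t : Tmx Γ A) (σ : Substx Γ Δ)
    (ρ : Renx Δ Θ) :
    (t.subst σ).rename ρ = t.subst (fun B v => (σ B v).rename ρ) := by
  induction t generalizing Δ Θ with
  | lam b ih =>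
    simp only [Tmx.rename, Tmx.subst, ih]
    congr 2; funext B v
    cases v with
    | vz => rfl
    | vs w => simp only [Substx.ext, rename_rename]; rfl
  | _ => simp_all [Tmx.rename, Tmx.subst]

theorem subst_subst {Γ Δ Θ : Ctxx ν} {A : Tyx ν} (t : Tmx Γ A) (σ : Substx Γ Δ)
    (τ : Substx Δ Θ) :
    (t.subst σ).subst τ = t.subst (fun B v => (σ B v).subst τ) := by
  induction t generalizing Δ Θ with
  | lam b ih =>
    simp only [Tmx.subst, ih]
    congr 2; funext B v
    cases v with
    | vz => rfl
    | vs w => simp only [Substx.ext, subst_rename, rename_subst]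
  | _ => simp_all [Tmx.subst]

theorem subst_var {Γ : Ctxx ν} {A : Tyx ν} (t : Tmx Γ A) : t.subst (fun _ v => .var v) = t := by
  induction t with
  | @lam Γ A B b ih =>
    have : Substx.ext (fun _ v => .var v : Substx Γ Γ) A = fun _ v => .var v := by
      funext B v; cases v <;> rfl
    simp only [Tmx.subst, this, ih]
  | _ => simp_all [Tmx.subst]

theorem rename_subst1 {Γ Δ : Ctxx ν} {A B : Tyx ν} (a : Tmx (A :: Γ) B) (b : Tmx Γ A)
    (ρ : Renx Γ Δ) :
    (a.subst1 b).rename ρ = (a.rename (Renx.ext ρ A)).subst1 (b.rename ρ) := by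
  simp only [Tmx.subst1, rename_subst, subst_rename]
  congr 1; funext C v; cases v <;> rfl

theorem rename_wk_ext {Γ Δ : Ctxx ν} {A B : Tyx ν} (a : Tmx Γ A) (ρ : Renx Γ Δ) :
    (a.rename (fun _ => Varx.vs (B := B))).rename (Renx.ext ρ B) =
      (a.rename ρ).rename (fun _ => Varx.vs) := by
  simp only [rename_rename]; rfl

theorem wk_subst_cons {Γ Δ : Ctxx ν} {A B : Tyx ν} (a : Tmx Γ A) (b : Tmx Δ B)
    (σ : Substx Γ Δ) :
    (a.rename (fun _ => Varx.vs (B := B))).subst (Substx.cons b σ) = a.subst σ := by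
  simp only [subst_rename]; rfl

theorem wk_subst1 {Γ : Ctxx ν} {A B : Tyx ν} (a : Tmx Γ A) (b : Tmx Γ B) :
    (a.rename (fun _ => Varx.vs (B := B))).subst (Substx.cons b (fun _ v => .var v)) = a := by
  rw [wk_subst_cons, subst_var]

theorem Eqvx_rename {Γ : Ctxx ν} {A : Tyx ν} {a b : Tmx Γ A} (h : Eqvx a b) :
    ∀ {Δ : Ctxx ν} (ρ : Renx Γ Δ), Eqvx (a.rename ρ) (b.rename ρ) := by
  induction h with
  | refl a => intros; exact .refl _
  | symm _ ih => intro Δ ρ; exact .symm (ih ρ)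
  | trans _ _ ih1 ih2 => intro Δ ρ; exact .trans (ih1 ρ) (ih2 ρ)
  | congApp _ _ ih1 ih2 => intro Δ ρ; exact .congApp (ih1 ρ) (ih2 ρ)
  | congLam _ ih => intro Δ ρ; exact .congLam (ih _)
  | congPair _ _ ih1 ih2 => intro Δ ρ; exact .congPair (ih1 ρ) (ih2 ρ)
  | congP1 _ ih => intro Δ ρ; exact .congP1 (ih ρ)
  | congP2 _ ih => intro Δ ρ; exact .congP2 (ih ρ)
  | beta a b => intro Δ ρ; rw [rename_subst1]; exact .beta _ _
  | eta a =>
    intro Δ ρ; simp only [Tmx.rename]; rw [rename_wk_ext]; exact .eta _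
  | prodBeta1 a b => intro Δ ρ; exact .prodBeta1 _ _
  | prodBeta2 a b => intro Δ ρ; exact .prodBeta2 _ _
  | prodEta c => intro Δ ρ; exact .prodEta _
  | unit a => intro Δ ρ; exact .unit _

theorem Ext_rename {Γ₀ : Ctxx ν} {A₀ : Tyx ν} {a₀ b₀ : Tmx Γ₀ A₀}
    {Γ : Ctxx ν} {A : Tyx ν} {a b : Tmx Γ A} (h : EqvxExt a₀ b₀ a b) :
    ∀ {Δ : Ctxx ν} (ρ : Renx Γ Δ), EqvxExt a₀ b₀ (a.rename ρ) (b.rename ρ) := by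
  induction h with
  | refl a => intros; exact .refl _
  | symm _ ih => intro Δ ρ; exact .symm (ih ρ)
  | trans _ _ ih1 ih2 => intro Δ ρ; exact .trans (ih1 ρ) (ih2 ρ)
  | congApp _ _ ih1 ih2 => intro Δ ρ; exact .congApp (ih1 ρ) (ih2 ρ)
  | congLam _ ih => intro Δ ρ; exact .congLam (ih _)
  | congPair _ _ ih1 ih2 => intro Δ ρ; exact .congPair (ih1 ρ) (ih2 ρ)
  | congP1 _ ih => intro Δ ρ; exact .congP1 (ih ρ)
  | congP2 _ ih => intro Δ ρ; exact .congP2 (ih ρ)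
  | beta a b => intro Δ ρ; rw [rename_subst1]; exact .beta _ _
  | eta a =>
    intro Δ ρ; simp only [Tmx.rename]; rw [rename_wk_ext]; exact .eta _
  | prodBeta1 a b => intro Δ ρ; exact .prodBeta1 _ _
  | prodBeta2 a b => intro Δ ρ; exact .prodBeta2 _ _
  | prodEta c => intro Δ ρ; exact .prodEta _
  | unit a => intro Δ ρ; exact .unit _
  | ax σ su => intro Δ ρ; rw [rename_subst, rename_subst]; exact .ax σ _

/-! ### Full type hierarchies -/

/-- The full type hierarchy over the set `B`. -/
@[reducible] def Sem (B : Type) : Tyx ν → Type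
  | .atom _ => B
  | .unit => Unit
  | .arrow A A' => Sem B A → Sem B A'
  | .prod A A' => Sem B A × Sem B A'

/-- Environments. -/
@[reducible] def Env (B : Type) (Γ : Ctxx ν) : Type := ∀ A : Tyx ν, Varx Γ A → Sem B A

def Env.cons {B : Type} {Γ : Ctxx ν} {A : Tyx ν} (x : Sem B A) (ρ : Env B Γ) :
    ∀ A' : Tyx ν, Varx (A :: Γ) A' → Sem B A'
  | _, .vz => x
  | _, .vs w => ρ _ w

def eval {B : Type} : ∀ {Γ : Ctxx ν} {A : Tyx ν}, Tmx Γ A → Env B Γ → Sem B A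
  | _, _, .var v, ρ => ρ _ v
  | _, _, .app f a, ρ => (show Sem B _ → Sem B _ from eval f ρ) (eval a ρ)
  | _, _, .lam b, ρ => fun x => eval b (Env.cons x ρ)
  | _, _, .pair a b, ρ => (eval a ρ, eval b ρ)
  | _, _, .p1 a, ρ => Prod.fst (show Sem B _ × Sem B _ from eval a ρ)
  | _, _, .p2 a, ρ => Prod.snd (show Sem B _ × Sem B _ from eval a ρ)
  | _, _, .k, _ => ()

theorem eval_rename {B : Type} {Γ Δ : Ctxx ν} {A : Tyx ν} (t : Tmx Γ A) (r : Renx Γ Δ)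
    (ρ : Env B Δ) : eval (t.rename r) ρ = eval t (fun C v => ρ C (r C v)) := by
  induction t generalizing Δ with
  | lam b ih =>
    simp only [Tmx.rename, eval, ih]
    funext x; congr 1; funext C v; cases v <;> rfl
  | _ => simp_all [Tmx.rename, eval]

theorem eval_subst {B : Type} {Γ Δ : Ctxx ν} {A : Tyx ν} (t : Tmx Γ A) (r : Substx Γ Δ)
    (ρ : Env B Δ) : eval (t.subst r) ρ = eval t (fun C v => eval (r C v) ρ) := by
  induction t generalizing Δ with
  | lam b ih =>
    simp only [Tmx.subst, eval, ih]
    funext x; congr 1; funext C v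
    cases v with
    | vz => rfl
    | vs w => simp only [Substx.ext, eval_rename]; rfl
  | _ => simp_all [Tmx.subst, eval]

theorem eval_sound {B : Type} {Γ : Ctxx ν} {A : Tyx ν} {a b : Tmx Γ A} (h : Eqvx a b) :
    ∀ ρ : Env B Γ, eval a ρ = eval b ρ := by
  induction h with
  | refl a => intro ρ; rfl
  | symm _ ih => intro ρ; exact (ih ρ).symm
  | trans _ _ ih1 ih2 => intro ρ; exact (ih1 ρ).trans (ih2 ρ)
  | congApp _ _ ih1 ih2 => intro ρ; simp only [eval, ih1, ih2]
  | congLam _ ih => intro ρ; simp only [eval, ih]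
  | congPair _ _ ih1 ih2 => intro ρ; simp only [eval, ih1, ih2]
  | congP1 _ ih => intro ρ; simp only [eval, ih]
  | congP2 _ ih => intro ρ; simp only [eval, ih]
  | beta a b =>
    intro ρ; simp only [eval, Tmx.subst1, eval_subst]
    congr 1; funext C v; cases v <;> rfl
  | eta a => intro ρ; simp only [eval, eval_rename]; rfl
  | prodBeta1 a b => intro ρ; rfl
  | prodBeta2 a b => intro ρ; rfl
  | prodEta c => intro ρ; rfl
  | unit a => intro ρ; rfl

theorem sem_finite {B : Type} [Finite B] : ∀ A : Tyx ν, Finite (Sem B A)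
  | .atom _ => ‹Finite B›
  | .unit => inferInstanceAs (Finite Unit)
  | .arrow A A' => by
    have := sem_finite (B := B) A
    have := sem_finite (B := B) A'
    exact inferInstanceAs (Finite (Sem B A → Sem B A'))
  | .prod A A' => by
    have := sem_finite (B := B) A
    have := sem_finite (B := B) A'
    exact inferInstanceAs (Finite (Sem B A × Sem B A'))

theorem sem_nonempty {B : Type} [Nonempty B] : ∀ A : Tyx ν, Nonempty (Sem B A)
  | .atom _ => ‹Nonempty B›
  | .unit => inferInstanceAs (Nonempty Unit)
  | .arrow A A' => by
    have := sem_nonempty (B := B) A'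
    exact inferInstanceAs (Nonempty (Sem B A → Sem B A'))
  | .prod A A' => by
    have := sem_nonempty (B := B) A
    have := sem_nonempty (B := B) A'
    exact inferInstanceAs (Nonempty (Sem B A × Sem B A'))

end Syn

/-! ### Finite completeness -/

section NbE
set_option linter.unusedVariables false
variable {ν : Type}

/-- Context extension. -/
inductive Ex : Ctxx ν → Ctxx ν → Type
  | refl {Γ : Ctxx ν} : Ex Γ Γ
  | step {Γ Δ : Ctxx ν} (A : Tyx ν) : Ex Γ Δ → Ex Γ (A :: Δ)

def Ex.wk : ∀ {Γ Δ : Ctxx ν}, Ex Γ Δ → Renx Γ Δ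
  | _, _, .refl => fun _ v => v
  | _, _, .step _ e => fun _ v => .vs (e.wk _ v)

def Ex.comp {Γ Δ : Ctxx ν} (e : Ex Γ Δ) : ∀ {Θ : Ctxx ν}, Ex Δ Θ → Ex Γ Θ
  | _, .refl => e
  | _, .step A f => .step A (e.comp f)

theorem Ex.wk_comp {Γ Δ Θ : Ctxx ν} (e : Ex Γ Δ) (f : Ex Δ Θ) :
    (e.comp f).wk = fun A v => f.wk A (e.wk A v) := by
  induction f with
  | refl => simp only [Ex.comp, Ex.wk]
  | step A f ih => simp only [Ex.comp, Ex.wk, ih]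

theorem Ex.len {Γ Δ : Ctxx ν} (e : Ex Γ Δ) : Γ.length ≤ Δ.length := by
  induction e with
  | refl => exact le_rfl
  | step A f ih => simp only [List.length_cons]; omega

theorem Ex.uniq {Γ Δ : Ctxx ν} (e f : Ex Γ Δ) : e = f := by
  induction e with
  | refl =>
    cases f with
    | refl => rfl
    | step A f => exact absurd f.len (by simp)
  | step A e ih =>
    cases f with
    | refl => exact absurd e.len (by simp)
    | step A f => rw [ih f]

theorem ren_comp {Γ Δ Θ : Ctxx ν} {A : Tyx ν} (t : Tmx Γ A) (e : Ex Γ Δ) (f : Ex Δ Θ) :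
    (t.rename e.wk).rename f.wk = t.rename (e.comp f).wk := by
  rw [rename_rename, Ex.wk_comp]

theorem ren_refl {Γ : Ctxx ν} {A : Tyx ν} (t : Tmx Γ A) :
    t.rename (Ex.refl : Ex Γ Γ).wk = t := by
  simp only [Ex.wk, rename_id]

theorem ren_step {Γ Δ : Ctxx ν} {A : Tyx ν} (t : Tmx Γ A) (e : Ex Γ Δ) (B : Tyx ν) :
    t.rename (Ex.step B e).wk = (t.rename e.wk).rename (fun _ => Varx.vs) := by
  simp only [rename_rename, Ex.wk]

/-- `Nm true t`: `t` is neutral; `Nm false t`: `t` is a long normal form. -/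
inductive Nm : Bool → ∀ {Γ : Ctxx ν} {A : Tyx ν}, Tmx Γ A → Prop
  | var {Γ : Ctxx ν} {A : Tyx ν} (v : Varx Γ A) : Nm true (.var v)
  | app {Γ : Ctxx ν} {A B : Tyx ν} {f : Tmx Γ (.arrow A B)} {a : Tmx Γ A} :
      Nm true f → Nm false a → Nm true (.app f a)
  | p1 {Γ : Ctxx ν} {A B : Tyx ν} {a : Tmx Γ (.prod A B)} : Nm true a → Nm true (.p1 a)
  | p2 {Γ : Ctxx ν} {A B : Tyx ν} {a : Tmx Γ (.prod A B)} : Nm true a → Nm true (.p2 a)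
  | atom {Γ : Ctxx ν} {p : ν} {a : Tmx Γ (.atom p)} : Nm true a → Nm false a
  | lam {Γ : Ctxx ν} {A B : Tyx ν} {b : Tmx (A :: Γ) B} : Nm false b → Nm false (.lam b)
  | pair {Γ : Ctxx ν} {A B : Tyx ν} {a : Tmx Γ A} {b : Tmx Γ B} :
      Nm false a → Nm false b → Nm false (.pair a b)
  | k {Γ : Ctxx ν} : Nm false (.k : Tmx Γ .unit)

theorem Nm.rename {i : Bool} {Γ : Ctxx ν} {A : Tyx ν} {t : Tmx Γ A} (h : Nm i t) :
    ∀ {Δ : Ctxx ν} (ρ : Renx Γ Δ), Nm i (t.rename ρ) := by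
  induction h with
  | var v => intros; exact .var _
  | app _ _ ih1 ih2 => intro Δ ρ; exact .app (ih1 ρ) (ih2 ρ)
  | p1 _ ih => intro Δ ρ; exact .p1 (ih ρ)
  | p2 _ ih => intro Δ ρ; exact .p2 (ih ρ)
  | atom _ ih => intro Δ ρ; exact .atom (ih ρ)
  | lam _ ih => intro Δ ρ; exact .lam (ih _)
  | pair _ _ ih1 ih2 => intro Δ ρ; exact .pair (ih1 ρ) (ih2 ρ)
  | k => intro Δ ρ; exact .k

/-- A node: a term of atomic type. -/
structure Node (ν : Type) : Type where
  ctx : Ctxx ν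
  ty : ν
  tm : Tmx ctx (.atom ty)

/-- Families of sets of terms of type `A`. -/
abbrev Fam (A : Tyx ν) : Type := ∀ Γ : Ctxx ν, Tmx Γ A → Prop

/-- All the weakenings of a variable. -/
def varFam {Γ : Ctxx ν} {A : Tyx ν} (v : Varx Γ A) : Fam A :=
  fun Γ' t => ∃ e : Ex Γ Γ', t = .var (e.wk _ v)

/-- The base set of the finite model. -/
abbrev Base (L : Set (Node ν)) : Type := Set L

/-- Reification and reflection. -/
def rr (L : Set (Node ν)) : ∀ A : Tyx ν, (Sem (Base L) A → Fam A) × (Fam A → Sem (Base L) A)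
  | .atom p => (fun x Γ n => ∃ h : (⟨Γ, p, n⟩ : Node ν) ∈ L, (⟨_, h⟩ : L) ∈ (x : Set L),
      fun X => ({s : L | ∃ (Γ : Ctxx ν) (n : Tmx Γ (.atom p)), s.1 = ⟨Γ, p, n⟩ ∧ X Γ n} : Set L))
  | .unit => (fun _ _ t => t = .k, fun _ => ())
  | .arrow A B =>
    (fun f Γ t => ∃ n, t = .lam n ∧
        (rr L B).1 (f ((rr L A).2 (varFam (Varx.vz (Γ := Γ) (A := A))))) (A :: Γ) n,
      fun X x => (rr L B).2 (fun Γ t => ∃ m n, t = .app m n ∧ X Γ m ∧ (rr L A).1 x Γ n))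
  | .prod A B =>
    (fun x Γ t => ∃ m n, t = .pair m n ∧ (rr L A).1 x.1 Γ m ∧ (rr L B).1 x.2 Γ n,
      fun X => ((rr L A).2 (fun Γ t => ∃ m, t = .p1 m ∧ X Γ m),
        (rr L B).2 (fun Γ t => ∃ m, t = .p2 m ∧ X Γ m)))

/-- The Kripke logical relation between terms and elements of the finite model. -/
def KR (L : Set (Node ν)) : ∀ (A : Tyx ν) (Γ : Ctxx ν), Tmx Γ A → Sem (Base L) A → Prop
  | .atom p, Γ, t, x => (∃ n, Nm true n ∧ Eqvx t n) ∧
      ∀ (Γ' : Ctxx ν) (e : Ex Γ Γ') (n : Tmx Γ' (.atom p)),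
        (rr L (.atom p)).1 x Γ' n → Eqvx (t.rename e.wk) n
  | .unit, _, _, _ => True
  | .arrow A B, Γ, t, f => ∀ (Γ' : Ctxx ν) (e : Ex Γ Γ') (s : Tmx Γ' A) (x : Sem (Base L) A),
      KR L A Γ' s x → KR L B Γ' (.app (t.rename e.wk) s) (f x)
  | .prod A B, Γ, t, x => KR L A Γ (.p1 t) x.1 ∧ KR L B Γ (.p2 t) x.2

theorem KR_conv (L : Set (Node ν)) : ∀ (A : Tyx ν) {Γ : Ctxx ν} {t u : Tmx Γ A}
    {x : Sem (Base L) A}, Eqvx t u → KR L A Γ t x → KR L A Γ u x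
  | .atom p, Γ, t, u, x, h, ⟨⟨n, hn, htn⟩, H⟩ =>
    ⟨⟨n, hn, h.symm.trans htn⟩, fun Γ' e n hx => (Eqvx_rename h _).symm.trans (H Γ' e n hx)⟩
  | .unit, _, _, _, _, _, _ => trivial
  | .arrow A B, Γ, t, u, f, h, H => fun Γ' e s x hs =>
    KR_conv L B (.congApp (Eqvx_rename h _) (.refl _)) (H Γ' e s x hs)
  | .prod A B, Γ, t, u, x, h, H =>
    ⟨KR_conv L A (.congP1 h) H.1, KR_conv L B (.congP2 h) H.2⟩

theorem KR_mono (L : Set (Node ν)) : ∀ (A : Tyx ν) {Γ Δ : Ctxx ν} (e : Ex Γ Δ) {t : Tmx Γ A}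
    {x : Sem (Base L) A}, KR L A Γ t x → KR L A Δ (t.rename e.wk) x
  | .atom p, Γ, Δ, e, t, x, ⟨⟨n, hn, htn⟩, H⟩ =>
    ⟨⟨_, hn.rename e.wk, Eqvx_rename htn _⟩, fun Γ' e' n hx => by
      rw [ren_comp]; exact H Γ' _ n hx⟩
  | .unit, _, _, _, _, _, _ => trivial
  | .arrow A B, Γ, Δ, e, t, f, H => fun Γ' e' s x hs => by
    rw [ren_comp]; exact H Γ' _ s x hs
  | .prod A B, Γ, Δ, e, t, x, H => ⟨KR_mono L A e H.1, KR_mono L B e H.2⟩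

theorem varFam_sound {Γ : Ctxx ν} {A : Tyx ν} (v : Varx Γ A) (Γ' : Ctxx ν) (e : Ex Γ Γ')
    (m : Tmx Γ' A) (h : varFam v Γ' m) : Eqvx ((Tmx.var v).rename e.wk) m := by
  obtain ⟨e', rfl⟩ := h
  rw [Ex.uniq e' e]
  exact .refl _

theorem reify_reflect (L : Set (Node ν)) : ∀ A : Tyx ν,
    (∀ (Γ : Ctxx ν) (t : Tmx Γ A) (x : Sem (Base L) A), KR L A Γ t x →
      (∃ n, Nm false n ∧ Eqvx t n) ∧
      ∀ (Γ' : Ctxx ν) (e : Ex Γ Γ') (n : Tmx Γ' A), (rr L A).1 x Γ' n →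
        Eqvx (t.rename e.wk) n) ∧
    (∀ (Γ : Ctxx ν) (t : Tmx Γ A) (X : Fam A), (∃ m, Nm true m ∧ Eqvx t m) →
      (∀ (Γ' : Ctxx ν) (e : Ex Γ Γ') (m : Tmx Γ' A), X Γ' m → Eqvx (t.rename e.wk) m) →
      KR L A Γ t ((rr L A).2 X)) := by
  intro A
  induction A with
  | atom p =>
    constructor
    · rintro Γ t x ⟨⟨n, hn, htn⟩, H⟩
      exact ⟨⟨n, .atom hn, htn⟩, H⟩
    · rintro Γ t X hm H
      refine ⟨hm, ?_⟩
      rintro Γ' e n ⟨hL, Γ'', n', heq, hX⟩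
      cases heq
      exact H _ e _ hX
  | unit =>
    constructor
    · intro Γ t x _
      refine ⟨⟨.k, .k, .unit _⟩, ?_⟩
      rintro Γ' e n rfl
      exact .unit _
    · intros; trivial
  | arrow A B ihA ihB =>
    have hvz : ∀ Γ : Ctxx ν, KR L A (A :: Γ) (.var .vz)
        ((rr L A).2 (varFam (Varx.vz (Γ := Γ) (A := A)))) := fun Γ =>
      ihA.2 _ _ _ ⟨_, .var _, .refl _⟩ (varFam_sound _)
    constructor
    · intro Γ t f H
      constructor
      · obtain ⟨n, hn, hE⟩ := (ihB.1 _ _ _ (H (A :: Γ) (.step A .refl) _ _ (hvz Γ))).1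
        refine ⟨.lam n, .lam hn, ?_⟩
        rw [ren_step, ren_refl] at hE
        exact (Eqvx.eta t).symm.trans (.congLam hE)
      · rintro Γ' e n ⟨n', rfl, hn'⟩
        have hE := (ihB.1 _ _ _ (H (A :: Γ') (.step A e) _ _ (hvz Γ'))).2 _ .refl n' hn'
        rw [ren_refl, ren_step] at hE
        exact (Eqvx.eta _).symm.trans (.congLam hE)
    · rintro Γ t X ⟨m, hm, hE⟩ H Γ' e s x hs
      obtain ⟨⟨n, hn, hsn⟩, hs2⟩ := ihA.1 _ _ _ hs
      refine ihB.2 _ _ _ ⟨_, .app (hm.rename e.wk) hn, .congApp (Eqvx_rename hE _) hsn⟩ ?_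
      rintro Γ'' e' _ ⟨m', n', rfl, hX, hn'⟩
      simp only [Tmx.rename]
      rw [ren_comp]
      exact .congApp (H _ _ _ hX) (hs2 _ _ _ hn')
  | prod A B ihA ihB =>
    constructor
    · rintro Γ t x ⟨H1, H2⟩
      obtain ⟨⟨n1, hn1, he1⟩, h1⟩ := ihA.1 _ _ _ H1
      obtain ⟨⟨n2, hn2, he2⟩, h2⟩ := ihB.1 _ _ _ H2
      refine ⟨⟨_, .pair hn1 hn2, (Eqvx.prodEta t).symm.trans (.congPair he1 he2)⟩, ?_⟩
      rintro Γ' e _ ⟨m, n, rfl, hm, hn⟩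
      exact (Eqvx.prodEta _).symm.trans (.congPair (h1 _ e _ hm) (h2 _ e _ hn))
    · rintro Γ t X ⟨m, hm, hE⟩ H
      constructor
      · refine ihA.2 _ _ _ ⟨_, .p1 hm, .congP1 hE⟩ ?_
        rintro Γ' e _ ⟨m', rfl, hX⟩
        exact .congP1 (H _ e _ hX)
      · refine ihB.2 _ _ _ ⟨_, .p2 hm, .congP2 hE⟩ ?_
        rintro Γ' e _ ⟨m', rfl, hX⟩
        exact .congP2 (H _ e _ hX)

theorem beta_subst {Γ Δ Δ' : Ctxx ν} {A B : Tyx ν} (b : Tmx (A :: Γ) B) (su : Substx Γ Δ)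
    (ρ : Renx Δ Δ') (s : Tmx Δ' A) :
    ((b.subst (Substx.ext su A)).rename (Renx.ext ρ A)).subst1 s =
      b.subst (Substx.cons s (fun C v => (su C v).rename ρ)) := by
  simp only [Tmx.subst1, rename_subst, subst_subst]
  congr 1; funext C v
  cases v with
  | vz => rfl
  | vs w =>
    simp only [Substx.ext, Substx.cons, rename_wk_ext, wk_subst1]

theorem KR_fund (L : Set (Node ν)) {Γ : Ctxx ν} {A : Tyx ν} (t : Tmx Γ A) :
    ∀ {Δ : Ctxx ν} (su : Substx Γ Δ) (ρ : Env (Base L) Γ),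
      (∀ (C : Tyx ν) (v : Varx Γ C), KR L C Δ (su C v) (ρ C v)) →
      KR L A Δ (t.subst su) (eval t ρ) := by
  induction t with
  | var v => intro Δ su ρ H; exact H _ v
  | app f a ih1 ih2 =>
    intro Δ su ρ H
    have := ih1 su ρ H _ .refl _ _ (ih2 su ρ H)
    rw [ren_refl] at this
    exact this
  | @lam Γ A B b ih =>
    intro Δ su ρ H Γ' e s x hs
    refine KR_conv L B (Eqvx.beta _ _).symm ?_
    have := ih (Substx.cons s (fun C v => (su C v).rename e.wk)) (Env.cons x ρ) (by
      intro C v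
      cases v with
      | vz => exact hs
      | vs w => exact KR_mono L _ e (H _ w))
    rw [← beta_subst] at this
    exact this
  | pair a b ih1 ih2 =>
    intro Δ su ρ H
    exact ⟨KR_conv L _ (Eqvx.prodBeta1 _ _).symm (ih1 su ρ H),
      KR_conv L _ (Eqvx.prodBeta2 _ _).symm (ih2 su ρ H)⟩
  | p1 a ih => intro Δ su ρ H; exact (ih su ρ H).1
  | p2 a ih => intro Δ su ρ H; exact (ih su ρ H).2
  | k => intros; trivial

/-- The canonical environment. -/
def canEnv (L : Set (Node ν)) (Γ : Ctxx ν) : Env (Base L) Γ :=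
  fun C v => (rr L C).2 (varFam v)

theorem KR_can (L : Set (Node ν)) {Γ : Ctxx ν} {A : Tyx ν} (t : Tmx Γ A) :
    KR L A Γ t (eval t (canEnv L Γ)) := by
  have := KR_fund L t (fun _ v => .var v) (canEnv L Γ)
    (fun C v => (reify_reflect L C).2 _ _ _ ⟨_, .var _, .refl _⟩ (varFam_sound _))
  rwa [subst_var] at this

theorem exists_nf {Γ : Ctxx ν} {A : Tyx ν} (t : Tmx Γ A) : ∃ n, Nm false n ∧ Eqvx t n :=
  ((reify_reflect ∅ A).1 _ _ _ (KR_can ∅ t)).1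

/-- Good environments: variables are reflected families that contain them. -/
def GoodEnv (L : Set (Node ν)) (Γ : Ctxx ν) (ρ : Env (Base L) Γ) : Prop :=
  ∀ (C : Tyx ν) (v : Varx Γ C), ∃ X : Fam C, ρ C v = (rr L C).2 X ∧
    ∀ (Γ' : Ctxx ν) (e : Ex Γ Γ'), X Γ' (.var (e.wk _ v))

theorem good_can (L : Set (Node ν)) (Γ : Ctxx ν) : GoodEnv L Γ (canEnv L Γ) :=
  fun _ v => ⟨varFam v, rfl, fun _ e => ⟨e, rfl⟩⟩

def Ex.trans1 {Γ Γ' : Ctxx ν} {A : Tyx ν} (e : Ex (A :: Γ) Γ') : Ex Γ Γ' :=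
  (Ex.step A .refl).comp e

theorem good_cons (L : Set (Node ν)) (Γ : Ctxx ν) (A : Tyx ν) (ρ : Env (Base L) Γ)
    (h : GoodEnv L Γ ρ) :
    GoodEnv L (A :: Γ)
      (Env.cons ((rr L A).2 (varFam (Varx.vz (Γ := Γ) (A := A)))) ρ) := by
  intro C v
  cases v with
  | vz => exact ⟨_, rfl, fun _ e => ⟨e, rfl⟩⟩
  | vs w =>
    obtain ⟨X, h1, h2⟩ := h C w
    refine ⟨X, h1, fun Γ' e => ?_⟩
    have := h2 Γ' ((Ex.step A .refl).comp e)
    simp only [Ex.wk_comp, Ex.wk] at this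
    exact this

/-- Every long normal form is recognized by a finite model. -/
theorem nf_recognized {i : Bool} {Γ : Ctxx ν} {A : Tyx ν} {t : Tmx Γ A} (h : Nm i t) :
    ∃ L₀ : Set (Node ν), L₀.Finite ∧ ∀ L : Set (Node ν), L₀ ⊆ L →
      ∀ ρ : Env (Base L) Γ, GoodEnv L Γ ρ →
        (i = true → ∃ X : Fam A, eval t ρ = (rr L A).2 X ∧ X Γ t) ∧
        (i = false → (rr L A).1 (eval t ρ) Γ t) := by
  induction h with
  | var v =>
    refine ⟨∅, Set.finite_empty, fun L _ ρ hρ => ⟨fun _ => ?_, by simp⟩⟩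
    obtain ⟨X, h1, h2⟩ := hρ _ v
    have h3 := h2 _ .refl
    simp only [Ex.wk] at h3
    exact ⟨X, h1, h3⟩
  | app _ _ ih1 ih2 =>
    obtain ⟨L1, f1, h1⟩ := ih1
    obtain ⟨L2, f2, h2⟩ := ih2
    refine ⟨L1 ∪ L2, f1.union f2, fun L hL ρ hρ => ⟨fun _ => ?_, by simp⟩⟩
    obtain ⟨X, hX, hm⟩ := (h1 L (Set.subset_union_left.trans hL) ρ hρ).1 rfl
    have hn := (h2 L (Set.subset_union_right.trans hL) ρ hρ).2 rfl
    refine ⟨fun Γ t => ∃ m n, t = .app m n ∧ X Γ m ∧ (rr L _).1 (eval _ ρ) Γ n,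
      ?_, _, _, rfl, hm, hn⟩
    simp only [eval]
    rw [hX]
    rfl
  | p1 _ ih =>
    obtain ⟨L1, f1, h1⟩ := ih
    refine ⟨L1, f1, fun L hL ρ hρ => ⟨fun _ => ?_, by simp⟩⟩
    obtain ⟨X, hX, hm⟩ := (h1 L hL ρ hρ).1 rfl
    refine ⟨fun Γ t => ∃ m, t = .p1 m ∧ X Γ m, ?_, _, rfl, hm⟩
    simp only [eval]
    rw [hX]
    rfl
  | p2 _ ih =>
    obtain ⟨L1, f1, h1⟩ := ih
    refine ⟨L1, f1, fun L hL ρ hρ => ⟨fun _ => ?_, by simp⟩⟩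
    obtain ⟨X, hX, hm⟩ := (h1 L hL ρ hρ).1 rfl
    refine ⟨fun Γ t => ∃ m, t = .p2 m ∧ X Γ m, ?_, _, rfl, hm⟩
    simp only [eval]
    rw [hX]
    rfl
  | @atom Γ p a _ ih =>
    obtain ⟨L1, f1, h1⟩ := ih
    refine ⟨insert ⟨Γ, p, a⟩ L1, f1.insert _, fun L hL ρ hρ => ⟨by simp, fun _ => ?_⟩⟩
    obtain ⟨X, hX, hm⟩ := (h1 L ((Set.subset_insert _ _).trans hL) ρ hρ).1 rfl
    rw [hX]
    exact ⟨hL (Set.mem_insert _ _), Γ, a, rfl, hm⟩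
  | lam _ ih =>
    obtain ⟨L1, f1, h1⟩ := ih
    refine ⟨L1, f1, fun L hL ρ hρ => ⟨by simp, fun _ => ?_⟩⟩
    exact ⟨_, rfl, (h1 L hL _ (good_cons L _ _ ρ hρ)).2 rfl⟩
  | pair _ _ ih1 ih2 =>
    obtain ⟨L1, f1, h1⟩ := ih1
    obtain ⟨L2, f2, h2⟩ := ih2
    refine ⟨L1 ∪ L2, f1.union f2, fun L hL ρ hρ => ⟨by simp, fun _ => ?_⟩⟩
    exact ⟨_, _, rfl, (h1 L (Set.subset_union_left.trans hL) ρ hρ).2 rfl,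
      (h2 L (Set.subset_union_right.trans hL) ρ hρ).2 rfl⟩
  | k => exact ⟨∅, Set.finite_empty, fun L _ ρ _ => ⟨by simp, fun _ => rfl⟩⟩

theorem finite_completeness {Γ : Ctxx ν} {A : Tyx ν} (a b : Tmx Γ A) (hne : ¬ Eqvx a b) :
    ∃ (B : Type) (_ : Finite B) (_ : Nonempty B) (ρ : Env B Γ), eval a ρ ≠ eval b ρ := by
  obtain ⟨n, hn, han⟩ := exists_nf a
  obtain ⟨L, hf, hL⟩ := nf_recognized hn
  have : Finite L := hf
  refine ⟨Base L, inferInstance, inferInstance, canEnv L Γ, fun heq => hne ?_⟩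
  have h1 := (hL L subset_rfl _ (good_can L Γ)).2 rfl
  rw [← eval_sound han, heq] at h1
  have h2 := ((reify_reflect L A).1 _ _ _ (KR_can L b)).2 _ .refl _ h1
  rw [ren_refl] at h2
  exact han.trans h2.symm

end NbE

/-! ### Definability of the elements of a finite full type hierarchy -/

section Definability
variable {ν : Type}

/-- Iterated products. -/
def pow (C : Tyx ν) : ℕ → Tyx ν
  | 0 => .unit
  | n + 1 => .prod C (pow C n)

def tup {Γ : Ctxx ν} {C : Tyx ν} : ∀ n : ℕ, (Fin n → Tmx Γ C) → Tmx Γ (pow C n)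
  | 0, _ => .k
  | n + 1, f => .pair (f 0) (tup n (fun i => f i.succ))

def prj {Γ : Ctxx ν} {C : Tyx ν} : ∀ n : ℕ, Fin n → Tmx Γ (pow C n) → Tmx Γ C
  | 0, i, _ => i.elim0
  | n + 1, i, t => Fin.cases (Tmx.p1 t) (fun j => prj n j (Tmx.p2 t)) i

theorem tup_subst {Γ Δ : Ctxx ν} {C : Tyx ν} (n : ℕ) (f : Fin n → Tmx Γ C) (σ : Substx Γ Δ) :
    (tup n f).subst σ = tup n (fun i => (f i).subst σ) := by
  induction n with
  | zero => rfl
  | succ n ih => simp only [tup, Tmx.subst, ih]; rfl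

theorem prj_subst {Γ Δ : Ctxx ν} {C : Tyx ν} (n : ℕ) (i : Fin n) (t : Tmx Γ (pow C n))
    (σ : Substx Γ Δ) : (prj n i t).subst σ = prj n i (t.subst σ) := by
  induction n with
  | zero => exact i.elim0
  | succ n ih =>
    induction i using Fin.cases with
    | zero => rfl
    | succ j => exact ih j _

theorem prj_rename {Γ Δ : Ctxx ν} {C : Tyx ν} (n : ℕ) (i : Fin n) (t : Tmx Γ (pow C n))
    (σ : Renx Γ Δ) : (prj n i t).rename σ = prj n i (t.rename σ) := by
  induction n with
  | zero => exact i.elim0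
  | succ n ih =>
    induction i using Fin.cases with
    | zero => rfl
    | succ j => exact ih j _

/-- The type of numerals. -/
def numTy (C : Tyx ν) (n : ℕ) : Tyx ν := .arrow (pow C n) C

def num {C : Tyx ν} {Γ : Ctxx ν} (n : ℕ) (i : Fin n) : Tmx Γ (numTy C n) :=
  .lam (prj n i (.var .vz))

theorem num_rename {C : Tyx ν} {Γ Δ : Ctxx ν} (n : ℕ) (i : Fin n) (ρ : Renx Γ Δ) :
    (num n i : Tmx Γ (numTy C n)).rename ρ = num n i := by
  simp only [num, Tmx.rename, prj_rename]
  rfl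

/-- Types which are targets of definitions by cases. -/
inductive Good (C : Tyx ν) : Tyx ν → Prop
  | base : Good C C
  | unit : Good C .unit
  | arrow (A : Tyx ν) {D : Tyx ν} : Good C D → Good C (.arrow A D)
  | prod {D E : Tyx ν} : Good C D → Good C E → Good C (.prod D E)

variable {Γ₀ : Ctxx ν} {A₀ : Tyx ν} (a₀ b₀ : Tmx Γ₀ A₀)

theorem prj_congr {Γ : Ctxx ν} {C : Tyx ν} (n : ℕ) (i : Fin n) {t u : Tmx Γ (pow C n)}
    (h : EqvxExt a₀ b₀ t u) : EqvxExt a₀ b₀ (prj n i t) (prj n i u) := by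
  induction n with
  | zero => exact i.elim0
  | succ n ih =>
    induction i using Fin.cases with
    | zero => exact .congP1 h
    | succ j => exact ih j (.congP2 h)

theorem prj_tup {Γ : Ctxx ν} {C : Tyx ν} (n : ℕ) (i : Fin n) (f : Fin n → Tmx Γ C) :
    EqvxExt a₀ b₀ (prj n i (tup n f)) (f i) := by
  induction n with
  | zero => exact i.elim0
  | succ n ih =>
    induction i using Fin.cases with
    | zero => exact .prodBeta1 _ _
    | succ j => exact (prj_congr a₀ b₀ n j (.prodBeta2 _ _)).trans (ih j _)

theorem num_app {Γ : Ctxx ν} {C : Tyx ν} (n : ℕ) (i : Fin n) (f : Fin n → Tmx Γ C) :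
    EqvxExt a₀ b₀ (.app (num n i) (tup n f)) (f i) := by
  refine (EqvxExt.beta _ _).trans ?_
  rw [Tmx.subst1, prj_subst]
  exact prj_tup a₀ b₀ n i f

theorem beta' {Γ : Ctxx ν} {A B : Tyx ν} {a : Tmx (A :: Γ) B} {b : Tmx Γ A} {c : Tmx Γ B}
    (h : a.subst (Substx.cons b (fun _ v => .var v)) = c) :
    EqvxExt a₀ b₀ (.app (.lam a) b) c := by
  subst h; exact .beta a b

/-- Definition by cases on numerals. -/
theorem case_num {C D : Tyx ν} (n : ℕ) (hD : Good C D) : ∀ {Δ : Ctxx ν} (g : Fin n → Tmx Δ D),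
    ∃ h : Tmx Δ (.arrow (numTy C n) D), ∀ (s : Tmx Δ (numTy C n)) (i : Fin n),
      EqvxExt a₀ b₀ s (num n i) → EqvxExt a₀ b₀ (.app h s) (g i) := by
  induction hD with
  | base =>
    intro Δ g
    refine ⟨.lam (.app (.var .vz) (tup n (fun i => (g i).rename (fun _ => Varx.vs)))), ?_⟩
    intro s i hs
    refine (beta' a₀ b₀ (c := .app s (tup n g)) ?_).trans
      ((EqvxExt.congApp hs (.refl _)).trans (num_app a₀ b₀ n i g))
    simp only [Tmx.subst, tup_subst, wk_subst1]; rfl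
  | unit =>
    intro Δ g
    exact ⟨.lam .k, fun s i _ => (EqvxExt.unit _).trans (EqvxExt.unit _).symm⟩
  | @arrow A D _ ih =>
    intro Δ g
    obtain ⟨h, hh⟩ := ih (Δ := A :: Δ)
      (fun i => .app ((g i).rename (fun _ => Varx.vs)) (.var .vz))
    refine ⟨.lam (.lam (.app (h.rename (Renx.ext (fun _ => Varx.vs) A)) (.var (.vs .vz)))), ?_⟩
    intro s i hs
    refine (beta' a₀ b₀ (c := .lam (.app h (s.rename (fun _ => Varx.vs)))) ?_).trans
      ((EqvxExt.congLam (hh _ i ?_)).trans (EqvxExt.eta _))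
    · simp only [Tmx.subst, subst_rename]
      congr 2
      refine Eq.trans ?_ (subst_var h)
      congr 1
      funext E v
      cases v <;> rfl
    · have := Ext_rename hs (fun _ => Varx.vs (B := A))
      rwa [num_rename] at this
  | prod _ _ ih1 ih2 =>
    intro Δ g
    obtain ⟨h1, hh1⟩ := ih1 (fun i => .p1 (g i))
    obtain ⟨h2, hh2⟩ := ih2 (fun i => .p2 (g i))
    refine ⟨.lam (.pair (.app (h1.rename (fun _ => Varx.vs)) (.var .vz))
      (.app (h2.rename (fun _ => Varx.vs)) (.var .vz))), ?_⟩
    intro s i hs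
    refine (beta' a₀ b₀ (c := .pair (.app h1 s) (.app h2 s)) ?_).trans
      ((EqvxExt.congPair (hh1 s i hs) (hh2 s i hs)).trans (.prodEta _))
    simp only [Tmx.subst, wk_subst1, Substx.cons]

variable (C : Tyx ν) (Δ : Ctxx ν) (n : ℕ)

/-- The type instance: all atoms become the type of numerals. -/
abbrev inst (A : Tyx ν) : Tyx ν := A.substA (fun _ => numTy C n)

theorem good_inst : ∀ A : Tyx ν, Good C (inst C n A)
  | .atom _ => .arrow _ .base
  | .unit => .unit
  | .arrow _ B => .arrow _ (good_inst B)
  | .prod A B => .prod (good_inst A) (good_inst B)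

/-- The logical relation between terms of instance types and elements of the hierarchy. -/
def DR : ∀ A : Tyx ν, Tmx Δ (inst C n A) → Sem (Fin n) A → Prop
  | .atom _, t, i => EqvxExt a₀ b₀ t (num (C := C) n i)
  | .unit, _, _ => True
  | .arrow A B, t, f => ∀ (s : Tmx Δ (inst C n A)) (x : Sem (Fin n) A),
      DR A s x → DR B (.app t s) (f x)
  | .prod A B, t, x => DR A (.p1 t) x.1 ∧ DR B (.p2 t) x.2

theorem DR_conv : ∀ (A : Tyx ν) {t u : Tmx Δ (inst C n A)} {x : Sem (Fin n) A},
    EqvxExt a₀ b₀ t u → DR a₀ b₀ C Δ n A t x → DR a₀ b₀ C Δ n A u x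
  | .atom _, _, _, _, h, H => h.symm.trans H
  | .unit, _, _, _, _, _ => trivial
  | .arrow _ B, _, _, _, h, H => fun s x hs => DR_conv B (.congApp h (.refl _)) (H s x hs)
  | .prod A B, _, _, _, h, H => ⟨DR_conv A (.congP1 h) H.1, DR_conv B (.congP2 h) H.2⟩

/-- Definition by cases on the elements of `Sem A`. -/
def Switch (A : Tyx ν) : Prop :=
  ∀ (D : Tyx ν), Good C D → ∀ g : Sem (Fin n) A → Tmx Δ D,
    ∃ h : Tmx Δ (.arrow (inst C n A) D), ∀ (s : Tmx Δ (inst C n A)) (x : Sem (Fin n) A),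
      DR a₀ b₀ C Δ n A s x → EqvxExt a₀ b₀ (.app h s) (g x)

open Classical in
theorem definable [Nonempty (Fin n)] (A : Tyx ν) :
    (∀ x : Sem (Fin n) A, ∃ t, DR a₀ b₀ C Δ n A t x) ∧ Switch a₀ b₀ C Δ n A := by
  induction A with
  | atom p =>
    exact ⟨fun i => ⟨num n i, .refl _⟩, fun D hD g => case_num a₀ b₀ n hD g⟩
  | unit =>
    refine ⟨fun _ => ⟨.k, trivial⟩, fun D hD g => ⟨.lam ((g ()).rename (fun _ => Varx.vs)), ?_⟩⟩
    intro s x _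
    exact beta' a₀ b₀ (wk_subst1 _ _)
  | arrow A B ihA ihB =>
    constructor
    · intro f
      choose g hg using ihB.1
      obtain ⟨h, hh⟩ := ihA.2 _ (good_inst C n B) (fun x => g (f x))
      exact ⟨h, fun s x hs => DR_conv a₀ b₀ C Δ n B (hh s x hs).symm (hg _)⟩
    · choose d hd using ihA.1
      have key : ∀ (l : List (Sem (Fin n) A)) (D : Tyx ν), Good C D →
          ∀ g : (Sem (Fin n) A → Sem (Fin n) B) → Tmx Δ D,
          (∀ f f', (∀ x ∈ l, f x = f' x) → g f = g f') →
          ∃ h : Tmx Δ (.arrow (inst C n (.arrow A B)) D),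
            ∀ (s : Tmx Δ (inst C n (.arrow A B))) (f : Sem (Fin n) A → Sem (Fin n) B),
            DR a₀ b₀ C Δ n (.arrow A B) s f → EqvxExt a₀ b₀ (.app h s) (g f) := by
        intro l
        induction l with
        | nil =>
          intro D hD g hg
          have := sem_nonempty (B := Fin n) B
          obtain ⟨y⟩ := this
          refine ⟨.lam ((g (fun _ => y)).rename (fun _ => Varx.vs)), fun s f _ => ?_⟩
          rw [hg f (fun _ => y) (by simp)]
          exact beta' a₀ b₀ (wk_subst1 _ _)
        | cons x l ih =>
          intro D hD g hg
          have step : ∀ y : Sem (Fin n) B, _ := fun y =>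
            ih D hD (fun f => g (Function.update f x y)) (by
              intro f f' hff
              apply hg
              intro z hz
              by_cases hzx : z = x
              · subst hzx; simp
              · simp only [Function.update_of_ne hzx]
                exact hff z (by simpa [hzx] using hz))
          choose h hh using step
          obtain ⟨u, hu⟩ := ihB.2 _ (.arrow (inst C n (.arrow A B)) hD) h
          refine ⟨.lam (.app (.app (u.rename (fun _ => Varx.vs))
            (.app (.var .vz) ((d x).rename (fun _ => Varx.vs)))) (.var .vz)), fun s f hs => ?_⟩
          refine (beta' a₀ b₀ (c := .app (.app u (.app s (d x))) s) ?_).trans ?_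
          · simp only [Tmx.subst, wk_subst1]; rfl
          · have h1 := hu _ _ (hs _ _ (hd x))
            have h2 := hh (f x) s f hs
            rw [Function.update_eq_self] at h2
            exact (EqvxExt.congApp h1 (.refl _)).trans h2
      have := sem_finite (B := Fin n) A
      obtain ⟨l, hl⟩ := Finite.exists_univ_list (Sem (Fin n) A)
      intro D hD g
      exact key l D hD g (fun f f' hff => by
        rw [show f = f' from funext fun x => hff x (hl.2 x)])
  | prod A B ihA ihB =>
    constructor
    · rintro ⟨x, y⟩
      obtain ⟨t, ht⟩ := ihA.1 x
      obtain ⟨u, hu⟩ := ihB.1 y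
      exact ⟨.pair t u, DR_conv a₀ b₀ C Δ n A (EqvxExt.prodBeta1 _ _).symm ht,
        DR_conv a₀ b₀ C Δ n B (EqvxExt.prodBeta2 _ _).symm hu⟩
    · intro D hD g
      choose h hh using fun x => ihB.2 D hD (fun y => g (x, y))
      obtain ⟨u, hu⟩ := ihA.2 _ (.arrow (inst C n B) hD) h
      refine ⟨.lam (.app (.app (u.rename (fun _ => Varx.vs)) (.p1 (.var .vz)))
        (.p2 (.var .vz))), fun s x hs => ?_⟩
      refine (beta' a₀ b₀ (c := .app (.app u (.p1 s)) (.p2 s)) ?_).trans ?_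
      · simp only [Tmx.subst, wk_subst1]; rfl
      · exact (EqvxExt.congApp (hu _ _ hs.1) (.refl _)).trans (hh x.1 _ _ hs.2)

theorem ext_subst1 {Γ Δ : Ctxx ν} {A B : Tyx ν} (b : Tmx (A :: Γ) B) (su : Substx Γ Δ)
    (s : Tmx Δ A) :
    (b.subst (Substx.ext su A)).subst (Substx.cons s (fun _ v => .var v)) =
      b.subst (Substx.cons s su) := by
  simp only [subst_subst]
  congr 1; funext C v
  cases v with
  | vz => rfl
  | vs w => simp only [Substx.ext, Substx.cons, wk_subst1]

theorem DR_fund {Γ : Ctxx ν} {A : Tyx ν} (t : Tmx Γ A) :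
    ∀ (su : Substx (Γ.map (Tyx.substA (fun _ => numTy C n))) Δ) (ρ : Env (Fin n) Γ),
      (∀ (E : Tyx ν) (v : Varx Γ E), DR a₀ b₀ C Δ n E (su _ (v.substA _)) (ρ E v)) →
      DR a₀ b₀ C Δ n A ((t.substA (fun _ => numTy C n)).subst su) (eval t ρ) := by
  induction t with
  | var v => intro su ρ H; exact H _ v
  | app f a ih1 ih2 => intro su ρ H; exact ih1 su ρ H _ _ (ih2 su ρ H)
  | @lam Γ A B b ih =>
    intro su ρ H s x hs
    refine DR_conv a₀ b₀ C Δ n B (beta' a₀ b₀ (ext_subst1 _ _ _)).symm ?_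
    refine ih (Substx.cons s su) (Env.cons x ρ) ?_
    intro E v
    cases v with
    | vz => exact hs
    | vs w => exact H _ w
  | pair a b ih1 ih2 =>
    intro su ρ H
    exact ⟨DR_conv a₀ b₀ C Δ n _ (EqvxExt.prodBeta1 _ _).symm (ih1 su ρ H),
      DR_conv a₀ b₀ C Δ n _ (EqvxExt.prodBeta2 _ _).symm (ih2 su ρ H)⟩
  | p1 a ih => intro su ρ H; exact (ih su ρ H).1
  | p2 a ih => intro su ρ H; exact (ih su ρ H).2
  | k => intros; trivial

theorem env_definable [Nonempty (Fin n)] : ∀ (Γ : Ctxx ν) (ρ : Env (Fin n) Γ),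
    ∃ su : Substx (Γ.map (Tyx.substA (fun _ => numTy C n))) Δ,
      ∀ (E : Tyx ν) (v : Varx Γ E), DR a₀ b₀ C Δ n E (su _ (v.substA _)) (ρ E v)
  | [], _ => by
    refine ⟨fun _ v => ?_, fun _ v => ?_⟩ <;> exact nomatch v
  | A :: Γ, ρ => by
    obtain ⟨su, hsu⟩ := env_definable Γ (fun E v => ρ E (.vs v))
    obtain ⟨t, ht⟩ := (definable a₀ b₀ C Δ n A).1 (ρ A .vz)
    refine ⟨Substx.cons t su, fun E v => ?_⟩
    cases v with
    | vz => exact ht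
    | vs w => exact hsu _ w

/-- Transport of the interpretation along a bijection of base sets. -/
def tr {B B' : Type} (e : B ≃ B') : ∀ A : Tyx ν, Sem B A ≃ Sem B' A
  | .atom _ => e
  | .unit => Equiv.refl _
  | .arrow A A' => Equiv.arrowCongr (tr e A) (tr e A')
  | .prod A A' => Equiv.prodCongr (tr e A) (tr e A')

theorem eval_tr {B B' : Type} (e : B ≃ B') {Γ : Ctxx ν} {A : Tyx ν} (t : Tmx Γ A) :
    ∀ ρ : Env B Γ, eval t (fun E v => tr e E (ρ E v)) = tr e A (eval t ρ) := by
  induction t with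
  | var v => intro ρ; rfl
  | app f a ih1 ih2 =>
    intro ρ
    simp only [eval, ih1, ih2]
    simp [tr]
  | @lam Γ A A' b ih =>
    intro ρ
    funext (x : Sem B' A)
    have := ih (Env.cons ((tr e A).symm x) ρ)
    simp only [eval]
    refine Eq.trans ?_ this
    congr 1
    funext E v
    cases v with
    | vz => simp [Env.cons]
    | vs w => rfl
  | pair a b ih1 ih2 => intro ρ; simp only [eval, ih1, ih2]; rfl
  | p1 a ih => intro ρ; simp only [eval, ih]; rfl
  | p2 a ih => intro ρ; simp only [eval, ih]; rfl
  | k => intro ρ; rfl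

end Definability

end MaxL

/--
**Maximality Corollary for Λ×.** If `a = b` is not provable in Λ×, then in Λ× extended
with `a = b` as a new axiom schema one can prove every formula `c = d`.
-/
theorem maximality_lambda_products {ν : Type} {Γ : Ctxx ν} {A : Tyx ν}
    (a b : Tmx Γ A) (hne : ¬ Eqvx a b) {Δ : Ctxx ν} {C : Tyx ν} (c d : Tmx Δ C) :
    EqvxExt a b c d := by
  classical
  obtain ⟨B, hB, hN, ρ', hρ'⟩ := MaxL.finite_completeness a b hne
  obtain ⟨n, ⟨e⟩⟩ := Finite.exists_equiv_fin B
  have : Nonempty (Fin n) := hN.map e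
  obtain ⟨ρ, hρ⟩ : ∃ ρ : MaxL.Env (Fin n) Γ, MaxL.eval a ρ ≠ MaxL.eval b ρ :=
    ⟨fun E v => MaxL.tr e E (ρ' E v), by
      rw [MaxL.eval_tr, MaxL.eval_tr]; exact fun h => hρ' ((MaxL.tr e A).injective h)⟩
  obtain ⟨su, hsu⟩ := MaxL.env_definable a b C Δ n Γ ρ
  have ha := MaxL.DR_fund a b C Δ n a su ρ hsu
  have hb := MaxL.DR_fund a b C Δ n b su ρ hsu
  obtain ⟨h, hh⟩ := (MaxL.definable a b C Δ n A).2 C .base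
    (fun x => if x = MaxL.eval a ρ then c else d)
  have h1 := hh _ _ ha
  have h2 := hh _ _ hb
  rw [if_pos rfl] at h1
  rw [if_neg (Ne.symm hρ)] at h2
  exact h1.symm.trans ((EqvxExt.congApp (.refl h) (.ax _ su)).trans h2)
end

section
/- Every type A of Λ× reduces by the type reductions to a unique product normal form A^π, and A^π is either of the form ×_{i=1}^n A_i with every A_i a type of Λ (containing neither × nor T), or A^π is T. -/
set_option autoImplicit false

/-- A type of Λ (no product types and no `T`), among the types of Λ×. -/
def LamTy {ν : Type} : Tyx ν → Prop
  | .atom _ => True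
  | .unit => False
  | .arrow A B => LamTy A ∧ LamTy B
  | .prod _ _ => False

/-- `IterProdOfLamTy B` : `B` is of the form `×_{i=1}^n A_i` (left-nested, `n ≥ 1`) with
every `A_i` a type of Λ. -/
inductive IterProdOfLamTy {ν : Type} : Tyx ν → Prop
  | single {A : Tyx ν} : LamTy A → IterProdOfLamTy A
  | cons {A B : Tyx ν} : IterProdOfLamTy A → LamTy B → IterProdOfLamTy (.prod A B)

open Relation in
theorem rtg_map {ν : Type} {f : Tyx ν → Tyx ν} (hf : ∀ a b, TyStep a b → TyStep (f a) (f b))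
    {a b : Tyx ν} (h : ReflTransGen TyStep a b) : ReflTransGen TyStep (f a) (f b) :=
  h.lift f hf

/-- Interpretation of a type as the list of its Λ-factors. -/
def nfl {ν : Type} : Tyx ν → List (Tyx ν)
  | .atom a => [.atom a]
  | .unit => []
  | .arrow A B => (nfl B).map (fun b => (nfl A).foldr Tyx.arrow b)
  | .prod A B => nfl A ++ nfl B

/-- Left-nested product of a list. -/
def toTy {ν : Type} : List (Tyx ν) → Tyx ν
  | [] => .unit
  | a :: l => l.foldl Tyx.prod a

theorem toTy_snoc {ν : Type} (l : List (Tyx ν)) (hl : l ≠ []) (a : Tyx ν) :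
    toTy (l ++ [a]) = .prod (toTy l) a := by
  cases l with
  | nil => exact absurd rfl hl
  | cons b l => simp [toTy]

theorem nfl_step {ν : Type} {A B : Tyx ν} (h : TyStep A B) : nfl A = nfl B := by
  induction h <;> simp_all [nfl, Function.comp_def]

theorem nfl_steps {ν : Type} {A B : Tyx ν} (h : Relation.ReflTransGen TyStep A B) :
    nfl A = nfl B := by
  induction h with
  | refl => rfl
  | tail _ h ih => exact ih.trans (nfl_step h)

theorem foldr_lam {ν : Type} (l : List (Tyx ν)) (hl : ∀ a ∈ l, LamTy a) (b : Tyx ν)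
    (hb : LamTy b) : LamTy (l.foldr Tyx.arrow b) := by
  induction l with
  | nil => exact hb
  | cons a l ih =>
    exact ⟨hl a (by simp), ih (fun x hx => hl x (by simp [hx]))⟩

theorem nfl_lam {ν : Type} (A : Tyx ν) : ∀ a ∈ nfl A, LamTy a := by
  induction A with
  | atom a => simp [nfl, LamTy]
  | unit => simp [nfl]
  | arrow A B ihA ihB =>
    intro a ha
    simp only [nfl, List.mem_map] at ha
    obtain ⟨b, hb, rfl⟩ := ha
    exact foldr_lam _ ihA b (ihB b hb)
  | prod A B ihA ihB =>
    intro a ha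
    simp only [nfl, List.mem_append] at ha
    exact ha.elim (ihA a) (ihB a)

theorem toTy_iter {ν : Type} (l : List (Tyx ν)) :
    (∀ a ∈ l, LamTy a) → IterProdOfLamTy (toTy l) ∨ toTy l = Tyx.unit := by
  induction l using List.reverseRecOn with
  | nil => intro _; exact Or.inr rfl
  | append_singleton l a ih =>
    intro h
    left
    have ha : LamTy a := h a (by simp)
    by_cases hl : l = []
    · subst hl; exact .single ha
    · rw [toTy_snoc l hl]
      rcases ih (fun x hx => h x (by simp [hx])) with h1 | h1
      · exact .cons h1 ha
      · exfalso
        cases l with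
        | nil => exact hl rfl
        | cons b l =>
          have hb : LamTy b := h b (by simp)
          rcases List.eq_nil_or_concat l with rfl | ⟨l', c, rfl⟩
          · simp only [toTy, List.foldl] at h1
            subst h1; exact hb
          · simp [toTy] at h1

theorem lam_pnf {ν : Type} {A B : Tyx ν} (h : TyStep A B) : ¬ LamTy A := by
  induction h <;> simp_all [LamTy]

theorem iter_ne_unit {ν : Type} {A : Tyx ν} (h : IterProdOfLamTy A) : A ≠ .unit := by
  rintro rfl
  cases h with
  | single h => exact h

theorem iter_pnf {ν : Type} {A : Tyx ν} (h : IterProdOfLamTy A) : PNF A := by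
  induction h with
  | single h => exact fun B hB => lam_pnf hB h
  | cons hA hB ih =>
    intro C hC
    cases hC with
    | prodAssoc => exact hB
    | prodUnit => exact hB
    | unitProd => exact iter_ne_unit hA rfl
    | prodL _ h => exact ih _ h
    | prodR _ h => exact lam_pnf h hB

theorem pnf_iter {ν : Type} (A : Tyx ν) : PNF A → IterProdOfLamTy A ∨ A = .unit := by
  induction A with
  | atom a => intro _; exact Or.inl (.single trivial)
  | unit => intro _; exact Or.inr rfl
  | arrow A B ihA ihB =>
    intro h
    have hA := ihA (fun C hC => h _ (.arrL B hC))
    have hB := ihB (fun C hC => h _ (.arrR A hC))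
    rcases hA with hA | rfl
    · rcases hB with hB | rfl
      · cases hA with
        | cons _ _ => exact absurd (.prodArr _ _ _) (h _)
        | single hA =>
          cases hB with
          | cons _ _ => exact absurd (.arrProd _ _ _) (h _)
          | single hB => exact Or.inl (.single ⟨hA, hB⟩)
      · exact absurd (.arrUnit _) (h _)
    · exact absurd (.unitArr _) (h _)
  | prod A B ihA ihB =>
    intro h
    have hA := ihA (fun C hC => h _ (.prodL B hC))
    have hB := ihB (fun C hC => h _ (.prodR A hC))
    rcases hA with hA | rfl
    · rcases hB with hB | rfl
      · cases hB with
        | cons _ _ => exact absurd (.prodAssoc _ _ _) (h _)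
        | single hB => exact Or.inl (.cons hA hB)
      · exact absurd (.prodUnit _) (h _)
    · exact absurd (.unitProd _) (h _)

theorem nfl_of_lam {ν : Type} (A : Tyx ν) : LamTy A → nfl A = [A] := by
  induction A with
  | atom a => intro _; rfl
  | unit => intro h; exact h.elim
  | arrow A B ihA ihB => intro h; simp [nfl, ihA h.1, ihB h.2]
  | prod A B _ _ => intro h; exact h.elim

theorem iter_toTy {ν : Type} {A : Tyx ν} (h : IterProdOfLamTy A) :
    nfl A ≠ [] ∧ toTy (nfl A) = A := by
  induction h with
  | single h => simp [nfl_of_lam _ h, toTy]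
  | cons hA hB ih =>
    refine ⟨by simp [nfl, ih.1], ?_⟩
    rw [nfl, nfl_of_lam _ hB, toTy_snoc _ ih.1, ih.2]

open Relation in
theorem prod_red {ν : Type} (l m : List (Tyx ν)) :
    ReflTransGen TyStep (.prod (toTy l) (toTy m)) (toTy (l ++ m)) := by
  induction m using List.reverseRecOn with
  | nil => simpa [toTy] using ReflTransGen.single (TyStep.prodUnit (toTy l))
  | append_singleton m a ih =>
    by_cases hl : l = []
    · subst hl; exact .single (.unitProd _)
    · by_cases hm : m = []
      · subst hm
        rw [List.nil_append, toTy_snoc l hl]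
        exact .refl
      · rw [toTy_snoc m hm, ← List.append_assoc, toTy_snoc _ (by simp [hl])]
        exact .head (.prodAssoc _ _ _)
          (rtg_map (f := fun x => .prod x a) (fun _ _ h => .prodL _ h) ih)

open Relation in
theorem arrow_red_left {ν : Type} (l : List (Tyx ν)) : ∀ b : Tyx ν,
    ReflTransGen TyStep (.arrow (toTy l) b) (l.foldr Tyx.arrow b) := by
  induction l using List.reverseRecOn with
  | nil => intro b; exact .single (.unitArr _)
  | append_singleton l a ih =>
    intro b
    by_cases hl : l = []
    · subst hl; exact .refl
    · rw [toTy_snoc l hl, List.foldr_append]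
      exact .head (.prodArr _ _ _) (ih _)

open Relation in
theorem arrow_red {ν : Type} (l m : List (Tyx ν)) :
    ReflTransGen TyStep (.arrow (toTy l) (toTy m))
      (toTy (m.map (fun b => l.foldr Tyx.arrow b))) := by
  induction m using List.reverseRecOn with
  | nil => exact .single (.arrUnit _)
  | append_singleton m a ih =>
    by_cases hm : m = []
    · subst hm; exact arrow_red_left l a
    · rw [toTy_snoc m hm, List.map_append, List.map_singleton, toTy_snoc _ (by simp [hm])]
      refine .head (.arrProd _ _ _) (ReflTransGen.trans
        (rtg_map (f := fun x => .prod x _) (fun _ _ h => .prodL _ h) ih)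
        (rtg_map (f := fun x => .prod _ x) (fun _ _ h => .prodR _ h) (arrow_red_left l a)))

open Relation in
theorem red_nfl {ν : Type} (A : Tyx ν) : ReflTransGen TyStep A (toTy (nfl A)) := by
  induction A with
  | atom a => exact .refl
  | unit => exact .refl
  | arrow A B ihA ihB =>
    exact ((rtg_map (f := fun x => .arrow x B) (fun _ _ h => .arrL _ h) ihA).trans
      (rtg_map (f := fun x => .arrow _ x) (fun _ _ h => .arrR _ h) ihB)).trans (arrow_red _ _)
  | prod A B ihA ihB =>
    exact ((rtg_map (f := fun x => .prod x B) (fun _ _ h => .prodL _ h) ihA).trans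
      (rtg_map (f := fun x => .prod _ x) (fun _ _ h => .prodR _ h) ihB)).trans (prod_red _ _)

/--
Every type `A` of Λ× reduces by the type reductions to a unique product normal form
`A^π`, and `A^π` is either of the form `×_{i=1}^n A_i` with every `A_i` a type of Λ, or
`A^π` is `T`.
-/
theorem product_normal_form_exists_unique {ν : Type} (A : Tyx ν) :
    ∃ B : Tyx ν,
      (Relation.ReflTransGen TyStep A B ∧ PNF B) ∧
      (∀ B' : Tyx ν, Relation.ReflTransGen TyStep A B' → PNF B' → B' = B) ∧
      (IterProdOfLamTy B ∨ B = Tyx.unit) := by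
  have hi := toTy_iter (nfl A) (nfl_lam A)
  refine ⟨toTy (nfl A), ⟨red_nfl A, ?_⟩, ?_, hi⟩
  · rcases hi with hi | hi
    · exact iter_pnf hi
    · rw [hi]
      intro B hB
      cases hB
  · intro B' hr hp
    rw [nfl_steps hr]
    rcases pnf_iter B' hp with h | rfl
    · exact (iter_toTy h).2.symm
    · rfl
end
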